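/- Fix integers p ≥ 1, d₁, d₂, d_v ≥ 1. Let 𝒱 ⊆ ℝ^{d_v}, let μ_v be a measure on ℝ^{d_v} with μ_v(ℝ^{d_v} ∖ 𝒱) = 0, and let (z*, v*) ∈ ℝ^{d₂} × 𝒱 be such that μ_v assigns strictly positive measure to every open neighbourhood of v*. Suppose: f₀ : ℝ^p → ℝ^p is a locally Lipschitz bijection with f₀(0) = 0, locally Lipschitz inverse, and det Df₀(z) ≠ 0 at Lebesgue-almost every z; for every (z⁽²⁾, v) ∈ ℝ^{d₂} × 𝒱, the map z⁽¹⁾ ↦ f̄₁(z⁽¹⁾, z⁽²⁾, v) from ℝ^{d₁} to ℝ^p is locally Lipschitz, surjective, with rank D_{z⁽¹⁾} f̄₁(z⁽¹⁾, z⁽²⁾, v) = p at almost every z⁽¹⁾; ρ is an admissible density on ℝ^p satisfying the local-maximum condition; σ : ℝ^{d₂} × ℝ^{d_v} → ℝ^{p×p} takes values in diagonal matrices with strictly positive diagonal entries, σ(z*, v*) = I_p, and σ is continuous at (z*, v*). Let f̃₀ be any locally Lipschitz bijection ℝ^p → ℝ^p with f̃₀(0) = 0 and det Df̃₀(z) ≠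 0 almost everywhere, and let f̃₁ : ℝ^{d₁} × ℝ^{d₂} × ℝ^{d_v} → ℝ^p be such that z⁽¹⁾ ↦ f̃₁(z⁽¹⁾, z⁽²⁾, v) is locally Lipschitz for every (z⁽²⁾, v). Then there exist σ̃ taking values in diagonal matrices with strictly positive entries, with σ̃(z*, v*) = I_p and σ̃ continuous at (z*, v*), and an admissible density ρ̃ on ℝ^p, such that for (Lebesgue ⊗ μ_v)-almost every (z⁽²⁾, v), ρ(σ(z⁽²⁾, v)⁻¹(f₀(ξ) − f̄₁(ξ̄, z⁽²⁾, v)))·|det(σ(z⁽²⁾, v)⁻¹ Df₀(ξ))| = ρ̃(σ̃(z⁽²⁾, v)⁻¹(f̃₀(ξ) − f̃₁(ξ̄, z⁽²⁾, v)))·|det(σ̃(z⁽²⁾, v)⁻¹ Df̃₀(ξ))| for Lebesgue-almost every (ξ, ξ̄) ∈ ℝ^p × ℝ^{d₁}, if and only if there exists Q ∈ O(p) such that for (Lebesgue ⊗ μ_v)-almost every (z⁽²⁾, v): f̃₀(z) = Q f₀(z) for all z ∈ ℝ^p, f̃₁(z⁽¹⁾, z⁽²⁾, v) = Q f̄₁(z⁽¹⁾,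 z⁽²⁾, v) for all z⁽¹⁾ ∈ ℝ^{d₁}, and Q σ(z⁽²⁾, v)² Qᵀ is a diagonal matrix; moreover, in that case σ̃(z⁽²⁾, v)² = Q σ(z⁽²⁾, v)² Qᵀ almost everywhere. -/

import Mathlib

open MeasureTheory Matrix

noncomputable section

/-- `E n` is Euclidean space `ℝ^n`. -/
abbrev E (n : ℕ) : Type := EuclideanSpace ℝ (Fin n)

/-- Action of a matrix on a Euclidean vector. -/
def mulVecE {m n : ℕ} (A : Matrix (Fin m) (Fin n) ℝ) (x : E n) : E m := WithLp.toLp 2 (A.mulVec x)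

/-- An admissible density on `ℝ^G`: continuously differentiable, everywhere strictly positive,
integrating to one, with zero mean and identity covariance (stated componentwise). -/
def AdmissibleDensity {G : ℕ} (ρ : E G → ℝ) : Prop :=
  ContDiff ℝ 1 ρ ∧ (∀ u, 0 < ρ u) ∧ ((∫ u, ρ u) = 1) ∧
    (∀ i, (∫ u : E G, u i * ρ u) = 0) ∧
    (∀ i j, (∫ u : E G, u i * u j * ρ u) = if i = j then 1 else 0)

/-- The local-maximum condition: `ρ` has a local maximum at some `u₀`, is twice continuously
differentiable in a neighbourhood of `u₀`, and has negative definite Hessian there. -/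
def LocalMaxCondition {G : ℕ} (ρ : E G → ℝ) : Prop :=
  ∃ u₀ : E G, IsLocalMax ρ u₀ ∧ ContDiffAt ℝ 2 ρ u₀ ∧
    ∀ v : E G, v ≠ 0 → iteratedFDeriv ℝ 2 ρ u₀ ![v, v] < 0

/-- A skedastic function on `ℝ^{d₂} × ℝ^{d_v}`: diagonal values with strictly positive diagonal
entries, equal to the identity at the normalisation point, and continuous there. -/
def SkedasticFn2 {p d₂ dv : ℕ} (σ : E d₂ × E dv → Matrix (Fin p) (Fin p) ℝ)
    (q0 : E d₂ × E dv) : Prop :=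
  (∀ q, (σ q).IsDiag) ∧ (∀ q i, 0 < σ q i i) ∧ σ q0 = 1 ∧ ContinuousAt σ q0


open Filter Asymptotics Topology in
/-- A continuous bijection of `ℝ^p` is open at all points of a nonempty open set (Baire). -/
lemma baire_open {p : ℕ} (g : E p → E p) (hg : Continuous g) (hb : Function.Bijective g) :
    ∃ O : Set (E p), IsOpen O ∧ O.Nonempty ∧ ∀ y ∈ O, map g (𝓝 y) = 𝓝 (g y) := by
  have hK : ∀ n : ℕ, IsCompact (g '' Metric.closedBall (0 : E p) n) := fun n =>
    (isCompact_closedBall (0 : E p) (n : ℝ)).image hg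
  obtain ⟨n, hn⟩ := nonempty_interior_of_iUnion_of_closed (f := fun n : ℕ =>
    g '' Metric.closedBall (0 : E p) n) (fun n => (hK n).isClosed) (by
      rw [← Set.image_iUnion, Metric.iUnion_closedBall_nat, Set.image_univ, hb.surjective.range_eq])
  refine ⟨g ⁻¹' interior (g '' Metric.closedBall (0 : E p) n), isOpen_interior.preimage hg, ?_, ?_⟩
  · obtain ⟨z, hz⟩ := hn
    obtain ⟨y, rfl⟩ := hb.surjective z
    exact ⟨y, hz⟩
  · intro y hy
    refine le_antisymm (hg.tendsto y) ?_
    intro s hs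
    rw [mem_map] at hs
    obtain ⟨N, hNs, hNo, hyN⟩ := mem_nhds_iff.mp hs
    have hC : IsClosed (g '' (Metric.closedBall (0 : E p) n \ N)) :=
      (((isCompact_closedBall (0 : E p) (n : ℝ)).diff hNo).image hg).isClosed
    have hmem : interior (g '' Metric.closedBall (0 : E p) n)
        ∩ (g '' (Metric.closedBall (0 : E p) n \ N))ᶜ ∈ 𝓝 (g y) := by
      refine (isOpen_interior.inter hC.isOpen_compl).mem_nhds ⟨hy, ?_⟩
      rintro ⟨x, hx, hxy⟩
      exact hx.2 (hb.injective hxy ▸ hyN)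
    filter_upwards [hmem] with z hz
    obtain ⟨x, hx, rfl⟩ := interior_subset hz.1
    by_contra hcon
    exact hz.2 ⟨x, ⟨hx, fun hxN => hcon (hNs hxN)⟩, rfl⟩

lemma volume_eq_zero_iff_hausdorff {p : ℕ} (s : Set (E p)) :
    volume s = 0 ↔ Measure.hausdorffMeasure (p : ℝ) s = 0 := by
  have h : (Measure.hausdorffMeasure (p : ℝ) : Measure (E p)).IsAddHaarMeasure := by
    have := isAddHaarMeasure_hausdorffMeasure (E := E p)
    simpa using this
  have h1 : (volume : Measure (E p)) ≪ Measure.hausdorffMeasure (p : ℝ) :=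
    Measure.absolutelyContinuous_isAddHaarMeasure _ _
  have h2 : (Measure.hausdorffMeasure (p : ℝ) : Measure (E p)) ≪ volume :=
    Measure.absolutelyContinuous_isAddHaarMeasure _ _
  exact ⟨fun h => h2 h, fun h => h1 h⟩

open Filter Topology in
lemma locLip_null_image {p : ℕ} {f : E p → E p} (hf : LocallyLipschitz f) {s : Set (E p)}
    (hs : volume s = 0) : volume (f '' s) = 0 := by
  choose K t ht hL using hf
  obtain ⟨c, hc, hcu⟩ := TopologicalSpace.countable_cover_nhds ht
  have hsub : f '' s ⊆ ⋃ x ∈ c, f '' (s ∩ t x) := by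
    rintro _ ⟨x, hx, rfl⟩
    have : x ∈ ⋃ x ∈ c, t x := hcu ▸ Set.mem_univ x
    simp only [Set.mem_iUnion] at this ⊢
    obtain ⟨i, hi, hxi⟩ := this
    exact ⟨i, hi, x, ⟨hx, hxi⟩, rfl⟩
  refine measure_mono_null hsub ?_
  rw [measure_biUnion_null_iff hc]
  intro i _
  rw [volume_eq_zero_iff_hausdorff]
  have h0 : Measure.hausdorffMeasure (p : ℝ) (s ∩ t i) = 0 := by
    rw [← volume_eq_zero_iff_hausdorff]
    exact measure_mono_null Set.inter_subset_left hs
  have := ((hL i).mono (Set.inter_subset_right (s := s))).hausdorffMeasure_image_le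
    (Nat.cast_nonneg (α := ℝ) p)
  rw [h0, mul_zero] at this
  exact le_antisymm this (zero_le)

lemma ae_image {p : ℕ} {f : E p → E p} (hf : LocallyLipschitz f) (hs : Function.Surjective f)
    {P : E p → Prop} (h : ∀ᵐ x, P x) : ∀ᵐ y, ∃ x, f x = y ∧ P x := by
  rw [ae_iff] at h ⊢
  refine measure_mono_null ?_ (locLip_null_image hf h)
  intro y hy
  obtain ⟨x, rfl⟩ := hs y
  exact ⟨x, fun hx => hy ⟨x, rfl, hx⟩, rfl⟩

lemma locLip_ae_diff {p d : ℕ} {f : E d → E p} (hf : LocallyLipschitz f) :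
    ∀ᵐ x, DifferentiableAt ℝ f x := by
  rw [ae_iff]
  refine measure_null_of_locally_null _ fun x _ => ?_
  obtain ⟨K, t, ht, hL⟩ := hf x
  refine ⟨interior t ∩ {a | ¬ DifferentiableAt ℝ f a}, ?_, ?_⟩
  · rw [Set.inter_comm]
    exact inter_mem_nhdsWithin _ (interior_mem_nhds.mpr ht)
  · have := (hL.mono interior_subset).ae_differentiableWithinAt_of_mem (μ := volume)
    rw [ae_iff] at this
    refine measure_mono_null ?_ this
    rintro y ⟨hy, hyd⟩
    simp only [Set.mem_ofPred_eq, Classical.not_imp]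
    refine ⟨hy, fun h => hyd (h.differentiableAt (isOpen_interior.mem_nhds hy))⟩

open Filter Topology in
/-- Pointwise local Lipschitz bound implies a global bound. -/
lemma lip_of_local {p : ℕ} {k : E p → E p} (hk : Continuous k) {C : ℝ}
    (h : ∀ x, ∀ᶠ z in 𝓝 x, ‖k z - k x‖ ≤ C * ‖z - x‖) (a b : E p) :
    ‖k b - k a‖ ≤ C * ‖b - a‖ := by
  have key : ∀ D, C < D → ‖k b - k a‖ ≤ D * ‖b - a‖ := by
    intro D hD
    rcases eq_or_ne a b with rfl | hab
    · simp
    have hpos : 0 < ‖b - a‖ := norm_pos_iff.mpr (sub_ne_zero.mpr hab.symm)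
    set γ : ℝ → E p := fun t => a + t • (b - a) with hγ
    have hγc : Continuous γ := by fun_prop
    have := image_norm_le_of_liminf_right_slope_norm_lt_deriv_boundary (a := 0) (b := 1)
      (f := fun t => k (γ t) - k a) (f' := fun _ => C * ‖b - a‖)
      (B := fun t => D * ‖b - a‖ * t) (B' := fun _ => D * ‖b - a‖)
      (by fun_prop) ?_ (by simp [hγ]) (by fun_prop) ?_ ?_ (x := 1) (by simp)
    · simpa [hγ] using this
    · intro x hx r hr
      refine Eventually.frequently ?_
      have h1 := (hγc.tendsto x).eventually (h (γ x))
      filter_upwards [nhdsWithin_le_nhds h1, self_mem_nhdsWithin] with z hz hzx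
      have hzx' : 0 < z - x := sub_pos.mpr hzx
      rw [slope_def_field, div_lt_iff₀ hzx']
      have e1 : γ z - γ x = (z - x) • (b - a) := by simp only [hγ]; module
      rw [e1, norm_smul, Real.norm_of_nonneg hzx'.le] at hz
      have h2 : ‖k (γ z) - k a‖ - ‖k (γ x) - k a‖ ≤ ‖k (γ z) - k (γ x)‖ := by
        have := norm_sub_norm_le (k (γ z) - k a) (k (γ x) - k a)
        simpa using this
      simp only [Function.comp]
      nlinarith
    · intro x _
      simpa using ((hasDerivAt_id x).const_mul (D * ‖b - a‖)).hasDerivWithinAt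
    · intro x _ _
      exact mul_lt_mul_of_pos_right hD hpos
  refine ge_of_tendsto (x := 𝓝[>] C) (f := fun D => D * ‖b - a‖) ?_ ?_
  · exact tendsto_nhdsWithin_of_tendsto_nhds ((continuous_id.mul continuous_const).tendsto C)
  · filter_upwards [self_mem_nhdsWithin] with D hD using key D hD

open Filter Asymptotics Topology in
lemma isom_of {p : ℕ} (k : E p → E p) (hk : Continuous k) (hb : Function.Bijective k)
    (ψ ψt : E p → ℝ) (hψ : ∀ a b, ψ (a - b) = ψt (k a - k b))
    (hexp : ψ ~[𝓝 0] fun t => ‖t‖ ^ 2) (a0 : E p)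
    (hd : HasFDerivAt k (ContinuousLinearMap.id ℝ (E p)) a0)
    (hmap : map k (𝓝 a0) = 𝓝 (k a0))
    (hdet : ∀ᵐ a, ∃ k' : E p →L[ℝ] E p, HasFDerivAt k k' a ∧ |k'.det| = 1) : Isometry k := by
  have hexpt : ψt ~[𝓝 0] fun t => ‖t‖ ^ 2 := by
    have h1 : (fun a => k a - k a0) ~[𝓝 a0] fun a => a - a0 := by
      have := hd.isLittleO
      simpa [IsEquivalent, Pi.sub_def] using this
    have h2 : (fun a => ‖k a - k a0‖ ^ 2) ~[𝓝 a0] fun a => ‖a - a0‖ ^ 2 := by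
      have h3 : (fun a => ‖k a - k a0‖) ~[𝓝 a0] fun a => ‖a - a0‖ := by
        have : (fun a => ‖k a - k a0‖ - ‖a - a0‖) =o[𝓝 a0] fun a => a - a0 := by
          refine IsBigO.trans_isLittleO ?_ h1.isLittleO
          exact IsBigO.of_bound 1 (Eventually.of_forall fun a => by
            simpa using abs_norm_sub_norm_le (k a - k a0) (a - a0))
        exact this.norm_right
      have h33 := h3.mul h3
      simp only [← pow_two] at h33
      exact h33
    have h4 : (fun a => ψt (k a - k a0)) ~[𝓝 a0] fun a => ‖k a - k a0‖ ^ 2 := by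
      refine IsEquivalent.trans ?_ h2.symm
      have ht : Tendsto (fun a => a - a0) (𝓝 a0) (𝓝 0) := by
        exact tendsto_sub_nhds_zero_iff.mpr tendsto_id
      have := hexp.comp_tendsto ht
      refine this.congr_left ?_
      exact Eventually.of_forall fun a => hψ a a0
    have h5 : (fun z => ψt (z - k a0)) ~[𝓝 (k a0)] fun z => ‖z - k a0‖ ^ 2 := by
      rw [← hmap]
      have := h4
      simpa only [Pi.sub_apply, IsEquivalent, IsLittleO_def, isBigOWith_iff, eventually_map] using this
    have ht : Tendsto (fun w => w + k a0) (𝓝 0) (𝓝 (k a0)) := by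
      have h : Continuous (fun w : E p => w + k a0) := by fun_prop
      simpa using h.tendsto 0
    have := h5.comp_tendsto ht
    simpa [Function.comp_def] using this
  have hlip : ∀ x y, ‖k y - k x‖ ≤ ‖y - x‖ := by
    have hC : ∀ ε : ℝ, 0 < ε → ε < 1 → ∀ x y, ‖k y - k x‖ ≤ √((1 + ε) / (1 - ε)) * ‖y - x‖ := by
      intro ε he he1 x y
      refine lip_of_local hk (fun x => ?_) x y
      have ht : Tendsto (fun a => a - x) (𝓝 x) (𝓝 0) := by
        exact tendsto_sub_nhds_zero_iff.mpr tendsto_id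
      have ht' : Tendsto (fun a => k a - k x) (𝓝 x) (𝓝 0) := by
        exact tendsto_sub_nhds_zero_iff.mpr (hk.tendsto x)
      filter_upwards [ht.eventually (hexp.isLittleO.bound he),
        ht'.eventually (hexpt.isLittleO.bound he)] with z h1 h2
      simp only [Pi.sub_apply, Real.norm_eq_abs, abs_pow, abs_norm] at h1 h2
      rw [hψ] at h1
      have h3 := (abs_le.mp h1).2
      have h4 := (abs_le.mp h2).1
      have h5 : ‖k z - k x‖ ^ 2 ≤ (1 + ε) / (1 - ε) * ‖z - x‖ ^ 2 := by
        rw [div_mul_eq_mul_div, le_div_iff₀ (by linarith)]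
        linarith
      calc ‖k z - k x‖ = √(‖k z - k x‖ ^ 2) := (Real.sqrt_sq (norm_nonneg _)).symm
        _ ≤ √((1 + ε) / (1 - ε) * ‖z - x‖ ^ 2) := Real.sqrt_le_sqrt h5
        _ = _ := by
          rw [Real.sqrt_mul (div_nonneg (by linarith) (by linarith)), Real.sqrt_sq (norm_nonneg _)]
    intro x y
    have hcont : Tendsto (fun ε : ℝ => √((1 + ε) / (1 - ε)) * ‖y - x‖) (𝓝[>] 0) (𝓝 (‖y - x‖)) := by
      have : ContinuousAt (fun ε : ℝ => √((1 + ε) / (1 - ε)) * ‖y - x‖) 0 := by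
        have : ContinuousAt (fun ε : ℝ => (1 + ε) / (1 - ε)) 0 :=
          ContinuousAt.div (by fun_prop) (by fun_prop) (by norm_num)
        fun_prop
      have h := this.tendsto
      simp only [add_zero, sub_zero, div_one, Real.sqrt_one, one_mul] at h
      exact tendsto_nhdsWithin_of_tendsto_nhds h
    refine ge_of_tendsto hcont ?_
    filter_upwards [Ioo_mem_nhdsGT (show (0 : ℝ) < 1 by norm_num)] with ε he
    exact hC ε he.1 he.2 x y
  have hvol : ∀ x (r : ℝ), volume (Metric.closedBall x r) ≤ volume (k '' Metric.closedBall x r) := by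
    intro x r
    set bad := toMeasurable volume {a | ¬ ∃ k' : E p →L[ℝ] E p, HasFDerivAt k k' a ∧ |k'.det| = 1}
    have hbad : volume bad = 0 := by rw [measure_toMeasurable]; exact hdet
    have hgood : ∀ a, a ∉ bad → ∃ k' : E p →L[ℝ] E p, HasFDerivAt k k' a ∧ |k'.det| = 1 := by
      intro a ha
      by_contra hc
      exact ha (subset_toMeasurable _ _ hc)
    choose! k' hk' using hgood
    have hm : MeasurableSet (Metric.closedBall x r \ bad) :=
      Metric.isClosed_closedBall.measurableSet.diff (measurableSet_toMeasurable _ _)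
    have := lintegral_abs_det_fderiv_eq_addHaar_image volume hm
      (fun a ha => (hk' a ha.2).1.hasFDerivWithinAt) hb.injective.injOn
    rw [setLIntegral_congr_fun (g := fun _ => 1) hm
      (fun a ha => by simp [(hk' a ha.2).2])] at this
    rw [setLIntegral_one] at this
    calc volume (Metric.closedBall x r) = volume (Metric.closedBall x r \ bad) :=
          (measure_sdiff_null hbad).symm
      _ = _ := this
      _ ≤ _ := measure_mono (Set.image_mono Set.sdiff_subset)
  have hball : ∀ x (r : ℝ), Metric.ball (k x) r ⊆ k '' Metric.closedBall x r := by
    intro x r z hz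
    by_contra hzn
    have hcl : IsClosed (k '' Metric.closedBall x r) :=
      ((isCompact_closedBall x r).image hk).isClosed
    have hsub : k '' Metric.closedBall x r ⊆ Metric.closedBall (k x) r := by
      rintro _ ⟨y, hy, rfl⟩
      rw [mem_closedBall_iff_norm] at hy ⊢
      exact (hlip x y).trans hy
    set W := Metric.ball (k x) r ∩ (k '' Metric.closedBall x r)ᶜ
    have hWo : IsOpen W := Metric.isOpen_ball.inter hcl.isOpen_compl
    have hW : 0 < volume W := hWo.measure_pos _ ⟨z, hz, hzn⟩
    have hdisj : Disjoint (k '' Metric.closedBall x r) W :=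
      Set.disjoint_left.mpr fun y hy hyW => hyW.2 hy
    have h1 : volume (k '' Metric.closedBall x r) + volume W ≤ volume (Metric.closedBall (k x) r) := by
      rw [← measure_union hdisj hWo.measurableSet]
      refine measure_mono (Set.union_subset hsub ?_)
      exact Set.inter_subset_left.trans Metric.ball_subset_closedBall
    have h2 := hvol x r
    have h3 : volume (Metric.closedBall (k x) r) = volume (Metric.closedBall x r) := by
      rw [Measure.addHaar_closedBall_center, Measure.addHaar_closedBall_center volume x]
    have hfin : volume (Metric.closedBall x r) ≠ ⊤ := measure_closedBall_lt_top.ne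
    rw [h3] at h1
    have h4 : volume (Metric.closedBall x r) + volume W ≤ volume (Metric.closedBall x r) + 0 := by
      rw [add_zero]
      exact (add_le_add_left h2 _).trans h1
    have := (ENNReal.add_le_add_iff_left hfin).mp h4
    exact absurd this (not_le.mpr hW)
  refine Isometry.of_dist_eq fun a b => ?_
  rw [dist_eq_norm, dist_eq_norm]
  refine le_antisymm (hlip b a) ?_
  refine le_of_forall_gt_imp_ge_of_dense fun r hr => ?_
  obtain ⟨a', ha', hka⟩ := hball b r (show k a ∈ _ by rw [mem_ball_iff_norm]; exact hr)
  have := hb.injective hka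
  subst this
  exact mem_closedBall_iff_norm.mp ha'

open scoped MatrixOrder in
lemma posSemidef_factor {p : ℕ} {A : Matrix (Fin p) (Fin p) ℝ} (hA : A.PosSemidef) :
    ∃ B : Matrix (Fin p) (Fin p) ℝ, A = Bᵀ * B := by
  obtain ⟨B, hB⟩ := CStarAlgebra.nonneg_iff_eq_star_mul_self.mp hA.nonneg
  refine ⟨B, ?_⟩
  rw [hB, Matrix.star_eq_conjTranspose, Matrix.conjTranspose_eq_transpose_of_trivial]

lemma bilin_expand {p : ℕ} (H : E p →L[ℝ] E p →L[ℝ] ℝ) (x y : E p) :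
    H x y = ∑ i, ∑ j, x i * y j * H (EuclideanSpace.single i 1) (EuclideanSpace.single j 1) := by
  have hx : ∀ x : E p, x = ∑ i, x i • EuclideanSpace.single i (1 : ℝ) := by
    intro x
    have := (EuclideanSpace.basisFun (Fin p) ℝ).sum_repr x
    simpa using this.symm
  conv_lhs => rw [hx x, hx y]
  simp only [map_sum, map_smul, _root_.sum_apply, _root_.smul_apply,
    smul_eq_mul, Finset.mul_sum]
  rw [Finset.sum_comm]
  refine Finset.sum_congr rfl fun i _ => Finset.sum_congr rfl fun j _ => by ring

/-- A positive definite form is the pullback of the standard one by a linear equivalence. -/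
lemma exists_sqrt_form {p : ℕ} (H : E p →L[ℝ] E p →L[ℝ] ℝ) (hs : ∀ x y, H x y = H y x)
    (hpos : ∀ x, x ≠ 0 → 0 < H x x) :
    ∃ L : E p ≃L[ℝ] E p, ∀ x, ‖L x‖ ^ 2 = H x x := by
  set A : Matrix (Fin p) (Fin p) ℝ :=
    Matrix.of fun i j => H (EuclideanSpace.single i 1) (EuclideanSpace.single j 1) with hAdef
  have hA : ∀ x : E p, H x x = (WithLp.ofLp x) ⬝ᵥ A.mulVec (WithLp.ofLp x) := by
    intro x
    rw [bilin_expand]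
    simp only [dotProduct, Matrix.mulVec, hAdef, Matrix.of_apply, Finset.mul_sum]
    refine Finset.sum_congr rfl fun i _ => Finset.sum_congr rfl fun j _ => by ring
  have hps : A.PosSemidef := by
    refine Matrix.PosSemidef.of_dotProduct_mulVec_nonneg ?_ ?_
    · ext i j
      simp [hAdef, hs]
    · intro x
      have := hA (WithLp.toLp 2 x)
      simp only [star_trivial]
      rw [← this]
      rcases eq_or_ne (WithLp.toLp 2 x) 0 with h | h
      · rw [h]; simp
      · exact (hpos _ h).le
  obtain ⟨B, hB⟩ := posSemidef_factor hps
  have hn : ∀ x : E p, ‖Matrix.toEuclideanLin B x‖ ^ 2 = H x x := by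
    intro x
    rw [hA, hB, ← Matrix.mulVec_mulVec, Matrix.dotProduct_mulVec, Matrix.vecMul_transpose,
      EuclideanSpace.norm_sq_eq]
    simp only [dotProduct, Matrix.toLpLin_apply, Real.norm_eq_abs, sq_abs]
    refine Finset.sum_congr rfl fun i _ => by ring
  have hinj : Function.Injective (Matrix.toEuclideanLin B : E p →ₗ[ℝ] E p) := by
    rw [← LinearMap.ker_eq_bot, LinearMap.ker_eq_bot']
    intro x hx
    by_contra hne
    have := hpos x hne
    rw [← hn, hx] at this
    simp at this
  exact ⟨(LinearEquiv.ofInjectiveEndo _ hinj).toContinuousLinearEquiv, fun x => hn x⟩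

open Filter Asymptotics Topology in
lemma taylor_quad {p : ℕ} {ρ : E p → ℝ} (hC : ContDiff ℝ 1 ρ) {u0 : E p} (hmax : IsLocalMax ρ u0)
    (h2 : ContDiffAt ℝ 2 ρ u0) :
    (fun t => ρ u0 - ρ (u0 + t) - (-(1 / 2 : ℝ)) * fderiv ℝ (fderiv ℝ ρ) u0 t t)
      =o[𝓝 0] fun t => ‖t‖ ^ 2 := by
  set H := fderiv ℝ (fderiv ℝ ρ) u0 with hH
  have hdiff : Differentiable ℝ ρ := hC.differentiable one_ne_zero
  have hHd : HasFDerivAt (fderiv ℝ ρ) H u0 :=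
    ((h2.fderiv_right (m := 1) (by norm_num)).differentiableAt one_ne_zero).hasFDerivAt
  have hsym : ∀ x y, H x y = H y x := fun x y =>
    h2.isSymmSndFDerivAt (by simp) x y
  set e : E p → ℝ := fun t => ρ (u0 + t) - (1 / 2 : ℝ) * H t t with he
  have hed : ∀ t, HasFDerivAt e (fderiv ℝ ρ (u0 + t) - H t) t := by
    intro t
    have h1 : HasFDerivAt (fun t => ρ (u0 + t)) (fderiv ℝ ρ (u0 + t)) t := by
      have := (hdiff (u0 + t)).hasFDerivAt.comp t ((hasFDerivAt_id t).const_add u0)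
      simpa [Function.comp_def] using this
    have h3 : HasFDerivAt (fun t => H t t) _ t := (H.hasFDerivAt (x := t)).clm_apply (hasFDerivAt_id t)
    have h4 := h1.sub (h3.const_mul (1 / 2 : ℝ))
    refine h4.congr_fderiv ?_
    ext v
    simp [hsym v t]
    ring
  rw [isLittleO_iff]
  intro ε hε
  have hlo := hHd.isLittleO.bound hε
  rw [Metric.eventually_nhds_iff_ball] at hlo
  obtain ⟨δ, hδ, hb⟩ := hlo
  have hz : fderiv ℝ ρ u0 = 0 := hmax.fderiv_eq_zero
  filter_upwards [Metric.ball_mem_nhds (0 : E p) hδ] with t ht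
  have hbound : ∀ x ∈ Metric.closedBall (0 : E p) ‖t‖, ‖fderiv ℝ e x‖ ≤ ε * ‖t‖ := by
    intro x hx
    rw [(hed x).fderiv]
    rw [mem_closedBall_zero_iff] at hx
    rw [mem_ball_zero_iff] at ht
    have := hb (u0 + x) (by simpa using lt_of_le_of_lt hx ht)
    simp only [hz, sub_zero, add_sub_cancel_left] at this
    exact this.trans (mul_le_mul_of_nonneg_left hx hε.le)
  have := (convex_closedBall (0 : E p) ‖t‖).norm_image_sub_le_of_norm_fderiv_le
    (fun x _ => (hed x).differentiableAt) hbound (x := 0) (y := t) (by simp) (by simp)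
  rw [← norm_neg]
  have e1 : -(ρ u0 - ρ (u0 + t) - (-(1 / 2 : ℝ)) * H t t) = e t - e 0 := by
    simp [he]; ring
  rw [e1]
  refine this.trans (le_of_eq ?_)
  simp only [sub_zero, norm_pow, norm_norm]
  ring

open Filter Asymptotics Topology in
lemma exists_normal_form {p : ℕ} {ρ : E p → ℝ} (hC : ContDiff ℝ 1 ρ) {u0 : E p}
    (hmax : IsLocalMax ρ u0) (h2 : ContDiffAt ℝ 2 ρ u0)
    (hneg : ∀ v : E p, v ≠ 0 → iteratedFDeriv ℝ 2 ρ u0 ![v, v] < 0) :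
    (∃ L : E p ≃L[ℝ] E p, (fun t => ρ u0 - ρ (u0 + L.symm t)) ~[𝓝 0] fun t => ‖t‖ ^ 2) ∧
    (∀ᶠ z in 𝓝[≠] u0, fderiv ℝ ρ z ≠ 0) := by
  have hT := taylor_quad hC hmax h2
  set H := fderiv ℝ (fderiv ℝ ρ) u0 with hH
  have hsym : ∀ x y, H x y = H y x := fun x y =>
    h2.isSymmSndFDerivAt (by simp) x y
  have hneg' : ∀ v : E p, v ≠ 0 → H v v < 0 := by
    intro v hv
    have := hneg v hv
    rw [iteratedFDeriv_two_apply] at this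
    simpa using this
  constructor
  · obtain ⟨L, hL⟩ := exists_sqrt_form ((-(1 / 2 : ℝ)) • H) (fun x y => by simp [hsym x y])
      (fun x hx => by
        have := hneg' x hx
        simp only [_root_.smul_apply, smul_eq_mul]
        linarith)
    refine ⟨L, ?_⟩
    have ht : Tendsto (fun t => L.symm t) (𝓝 0) (𝓝 0) := by
      simpa using L.symm.continuous.tendsto 0
    have h1 := hT.comp_tendsto ht
    have h3 : (fun t => ‖L.symm t‖ ^ 2) =O[𝓝 0] fun t : E p => ‖t‖ ^ 2 :=
      ((L.symm : E p →L[ℝ] E p).isBigO_id (𝓝 0)).norm_left.norm_right.pow 2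
    have h4 := h1.trans_isBigO h3
    unfold IsEquivalent
    refine h4.congr_left fun t => ?_
    have := hL (L.symm t)
    simp only [ContinuousLinearEquiv.apply_symm_apply, _root_.smul_apply,
      smul_eq_mul] at this
    simp only [Function.comp, Pi.sub_apply, this]
  · have hHd : HasFDerivAt (fderiv ℝ ρ) H u0 :=
      ((h2.fderiv_right (m := 1) (by norm_num)).differentiableAt one_ne_zero).hasFDerivAt
    refine hHd.eventually_ne ?_
    have hk : (H : E p →ₗ[ℝ] (E p →L[ℝ] ℝ)).ker = ⊥ := by
      rw [LinearMap.ker_eq_bot']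
      intro v hv
      by_contra hne
      have := hneg' v hne
      have hv' : H v = 0 := hv
      rw [hv'] at this
      simp at this
    obtain ⟨K, _, hK⟩ := (H : E p →ₗ[ℝ] (E p →L[ℝ] ℝ)).exists_antilipschitzWith hk
    exact ⟨K, hK⟩

/-- The continuous linear map of a matrix. -/
def cl {m n : ℕ} (A : Matrix (Fin m) (Fin n) ℝ) : E n →L[ℝ] E m :=
  LinearMap.toContinuousLinearMap (Matrix.toEuclideanLin A)

lemma cl_apply {m n : ℕ} (A : Matrix (Fin m) (Fin n) ℝ) (x : E n) : cl A x = mulVecE A x := rfl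

lemma mulVecE_apply {m n : ℕ} (A : Matrix (Fin m) (Fin n) ℝ) (x : E n) (i : Fin m) :
    mulVecE A x i = ∑ j, A i j * x j := rfl

lemma cl_det {p : ℕ} (A : Matrix (Fin p) (Fin p) ℝ) : (cl A).det = A.det := by
  unfold cl
  rw [LinearMap.det_toContinuousLinearMap, Matrix.toEuclideanLin_eq_toLin_orthonormal,
    LinearMap.det_toLin]

lemma exists_cl {m n : ℕ} (T : E n →L[ℝ] E m) : ∃ A : Matrix (Fin m) (Fin n) ℝ, T = cl A :=
  ⟨Matrix.toEuclideanLin.symm T.toLinearMap, by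
    ext1 x
    simp [cl]⟩

lemma mulVecE_mul {l m n : ℕ} (A : Matrix (Fin l) (Fin m) ℝ) (B : Matrix (Fin m) (Fin n) ℝ)
    (x : E n) : mulVecE (A * B) x = mulVecE A (mulVecE B x) := by
  simp [mulVecE, Matrix.mulVec_mulVec]

lemma mulVecE_one {n : ℕ} (x : E n) : mulVecE (1 : Matrix (Fin n) (Fin n) ℝ) x = x := by
  simp [mulVecE]

lemma mulVecE_sub {m n : ℕ} (A : Matrix (Fin m) (Fin n) ℝ) (x y : E n) :
    mulVecE A (x - y) = mulVecE A x - mulVecE A y := by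
  simp only [← cl_apply, map_sub]

lemma mulVecE_zero {m n : ℕ} (A : Matrix (Fin m) (Fin n) ℝ) :
    mulVecE A (0 : E n) = 0 := by
  simp only [← cl_apply, map_zero]

lemma mulVecE_ext {m n : ℕ} {A B : Matrix (Fin m) (Fin n) ℝ} (h : ∀ x, mulVecE A x = mulVecE B x) :
    A = B := by
  have : cl A = cl B := ContinuousLinearMap.ext h
  unfold cl at this
  simpa using this

lemma adm_int {p : ℕ} {ρ : E p → ℝ} (h : AdmissibleDensity ρ) :
    Integrable ρ ∧ (∀ i, Integrable fun u : E p => u i * ρ u) ∧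
      (∀ i j, Integrable fun u : E p => u i * u j * ρ u) := by
  obtain ⟨hC, hpos, h1, h2, h3⟩ := h
  have hc : Continuous ρ := hC.continuous
  have i0 : Integrable ρ := by
    by_contra hn
    rw [integral_undef hn] at h1
    exact zero_ne_one h1
  have ii : ∀ i, Integrable fun u : E p => u i * u i * ρ u := by
    intro i
    by_contra hn
    have := h3 i i
    rw [integral_undef hn] at this
    simp at this
  refine ⟨i0, fun i => ?_, fun i j => ?_⟩
  · refine Integrable.mono' (i0.add (ii i)) (by fun_prop) (Filter.Eventually.of_forall fun u => ?_)
    rw [Real.norm_eq_abs, abs_mul, abs_of_pos (hpos u)]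
    have : |u i| ≤ 1 + u i * u i := by
      rw [abs_le]; constructor <;> nlinarith [sq_nonneg (u i - 1), sq_nonneg (u i + 1)]
    have := mul_le_mul_of_nonneg_right this (hpos u).le
    simp only [Pi.add_apply]
    linarith
  · refine Integrable.mono' ((ii i).add (ii j)) (by fun_prop) (Filter.Eventually.of_forall fun u => ?_)
    rw [Real.norm_eq_abs, abs_mul, abs_of_pos (hpos u)]
    have : |u i * u j| ≤ u i * u i + u j * u j := by
      rw [abs_le]; constructor <;> nlinarith [sq_nonneg (u i - u j), sq_nonneg (u i + u j)]
    have := mul_le_mul_of_nonneg_right this (hpos u).le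
    simp only [Pi.add_apply]
    linarith

lemma adm_mom1 {p : ℕ} {ρ : E p → ℝ} (h : AdmissibleDensity ρ) (M : Matrix (Fin p) (Fin p) ℝ)
    (b : E p) (i : Fin p) : ∫ u, (mulVecE M u + b) i * ρ u = b i := by
  obtain ⟨i0, i1, i2⟩ := adm_int h
  obtain ⟨hC, hpos, h1, h2, h3⟩ := h
  have e : ∀ u : E p, (mulVecE M u + b) i * ρ u = (∑ j, M i j * (u j * ρ u)) + b i * ρ u := by
    intro u
    simp only [PiLp.add_apply, mulVecE_apply, add_mul, Finset.sum_mul, mul_assoc]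
  simp only [e]
  rw [integral_add (integrable_finsetSum _ fun j _ => (i1 j).const_mul _) (i0.const_mul _),
    integral_finsetSum _ fun j _ => (i1 j).const_mul _]
  simp [integral_const_mul, h2, h1]

lemma adm_mom2 {p : ℕ} {ρ : E p → ℝ} (h : AdmissibleDensity ρ) (M : Matrix (Fin p) (Fin p) ℝ)
    (i j : Fin p) : ∫ u, mulVecE M u i * mulVecE M u j * ρ u = (M * Mᵀ) i j := by
  obtain ⟨i0, i1, i2⟩ := adm_int h
  obtain ⟨hC, hpos, h1, h2, h3⟩ := h
  have e : ∀ u : E p, mulVecE M u i * mulVecE M u j * ρ u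
      = ∑ k, ∑ l, M i k * M j l * (u k * u l * ρ u) := by
    intro u
    simp only [mulVecE_apply, Finset.sum_mul, Finset.mul_sum]
    rw [Finset.sum_comm]
    refine Finset.sum_congr rfl fun k _ => Finset.sum_congr rfl fun l _ => by ring
  simp only [e]
  rw [integral_finsetSum _ fun k _ => integrable_finsetSum _ fun l _ => (i2 k l).const_mul _]
  simp_rw [integral_finsetSum _ fun l _ => (i2 _ l).const_mul _, integral_const_mul, h3]
  simp [Matrix.mul_apply]

lemma change_var {p : ℕ} (M : Matrix (Fin p) (Fin p) ℝ) (hM : M.det ≠ 0) (b : E p) (h : E p → ℝ) :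
    ∫ v, h v = ∫ u, |M.det| * h (mulVecE M u + b) := by
  have hu : IsUnit M.det := isUnit_iff_ne_zero.mpr hM
  have hinj : Function.Injective (fun u : E p => mulVecE M u + b) := by
    intro x y hxy
    have : mulVecE M x = mulVecE M y := add_right_cancel hxy
    rw [← mulVecE_one x, ← mulVecE_one y, ← Matrix.nonsing_inv_mul M hu, mulVecE_mul, this,
      mulVecE_mul]
  have hsurj : Function.Surjective (fun u : E p => mulVecE M u + b) := by
    intro y
    refine ⟨mulVecE M⁻¹ (y - b), ?_⟩
    simp only [← mulVecE_mul, Matrix.mul_nonsing_inv M hu, mulVecE_one]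
    abel
  have := integral_image_eq_integral_abs_det_fderiv_smul (volume : Measure (E p))
    MeasurableSet.univ (f := fun u => mulVecE M u + b) (f' := fun _ => cl M)
    (fun x _ => (((cl M).hasFDerivAt (x := x)).add_const b).hasFDerivWithinAt) hinj.injOn h
  rw [Set.image_univ, hsurj.range_eq] at this
  simpa [cl_det] using this

lemma moments {p : ℕ} {ρ ρt : E p → ℝ} (h : AdmissibleDensity ρ) (ht : AdmissibleDensity ρt)
    (M : Matrix (Fin p) (Fin p) ℝ) (hM : M.det ≠ 0) (b : E p)
    (he : ∀ u, ρ u = ρt (mulVecE M u + b) * |M.det|) : b = 0 ∧ M * Mᵀ = 1 := by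
  have hb : b = 0 := by
    ext i
    have h1 := adm_mom1 h M b i
    have h2 := ht.2.2.2.1 i
    rw [change_var M hM b] at h2
    rw [PiLp.zero_apply, ← h1, ← h2]
    congr 1
    ext u
    rw [he]; ring
  refine ⟨hb, ?_⟩
  ext i j
  have h2 := ht.2.2.2.2 i j
  rw [change_var M hM b] at h2
  rw [← adm_mom2 h M i j, Matrix.one_apply, ← h2]
  congr 1
  ext u
  rw [he, hb]
  simp only [add_zero]; ring

lemma adm_rot {p : ℕ} {ρ : E p → ℝ} (h : AdmissibleDensity ρ) (Q : Matrix (Fin p) (Fin p) ℝ)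
    (hQ : Q * Qᵀ = 1) : AdmissibleDensity (fun u => ρ (mulVecE Qᵀ u)) := by
  have hQ' : Qᵀ * Q = 1 := mul_eq_one_comm.mp hQ
  have hdet : |Q.det| = 1 := by
    have := congrArg Matrix.det hQ
    rw [Matrix.det_mul, Matrix.det_transpose, Matrix.det_one] at this
    rcases mul_self_eq_one_iff.mp this with h | h <;> simp [h]
  have hne : Q.det ≠ 0 := by intro h; simp [h] at hdet
  have hinv : ∀ u : E p, mulVecE Qᵀ (mulVecE Q u) = u := by
    intro u; rw [← mulVecE_mul, hQ', mulVecE_one]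
  refine ⟨h.1.comp (cl Qᵀ).contDiff, fun u => h.2.1 _, ?_, ?_, ?_⟩
  · rw [change_var Q hne 0]
    simp only [add_zero, hinv, hdet, one_mul]
    exact h.2.2.1
  · intro i
    rw [change_var Q hne 0]
    have := adm_mom1 h Q 0 i
    simpa [hinv, hdet] using this
  · intro i j
    rw [change_var Q hne 0]
    have := adm_mom2 h Q i j
    rw [hQ, Matrix.one_apply] at this
    simpa [hinv, hdet] using this

lemma surj_of_rank {p d : ℕ} {A : E d →L[ℝ] E p}
    (h : LinearMap.rank A.toLinearMap = (p : Cardinal)) : Function.Surjective A := by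
  have h1 : Module.finrank ℝ A.toLinearMap.range = p := by
    rw [Module.finrank]
    have h' : Module.rank ℝ A.toLinearMap.range = (p : Cardinal) := h
    rw [h']; simp
  have h2 : A.toLinearMap.range = ⊤ := Submodule.eq_top_of_finrank_eq (by rw [h1]; simp)
  exact LinearMap.range_eq_top.mp h2

lemma surj_of_ker {p d : ℕ} {A B : E d →L[ℝ] E p} (hA : Function.Surjective A)
    (h : ∀ x, B x = 0 → A x = 0) : Function.Surjective B := by
  have hle : B.toLinearMap.ker ≤ A.toLinearMap.ker := fun x hx => h x hx
  have h1 := Submodule.finrank_mono hle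
  have h2 := A.toLinearMap.finrank_range_add_finrank_ker
  have h3 := B.toLinearMap.finrank_range_add_finrank_ker
  have h4 : A.toLinearMap.range = ⊤ := LinearMap.range_eq_top.mpr hA
  rw [h4, finrank_top] at h2
  have h5 : B.toLinearMap.range = ⊤ := by
    refine Submodule.eq_top_of_finrank_eq (le_antisymm (Submodule.finrank_le _) ?_)
    omega
  exact LinearMap.range_eq_top.mp h5

lemma span_fderiv {p : ℕ} {ρ : E p → ℝ} {u0 : E p} (h2 : ContDiffAt ℝ 2 ρ u0)
    (hneg : ∀ v : E p, v ≠ 0 → iteratedFDeriv ℝ 2 ρ u0 ![v, v] < 0) (v : E p)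
    (h : ∀ u, fderiv ℝ ρ u v = 0) : v = 0 := by
  by_contra hv
  have h1 := hneg v hv
  rw [iteratedFDeriv_two_apply] at h1
  have hHd : HasFDerivAt (fderiv ℝ ρ) (fderiv ℝ (fderiv ℝ ρ) u0) u0 :=
    ((h2.fderiv_right (m := 1) (by norm_num)).differentiableAt one_ne_zero).hasFDerivAt
  have h3 := hHd.clm_apply (hasFDerivAt_const v u0)
  have h4 : HasFDerivAt (fun u => fderiv ℝ ρ u v) (0 : E p →L[ℝ] ℝ) u0 := by
    simp only [h]
    exact hasFDerivAt_const _ _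
  have h5 := congrArg (fun T : E p →L[ℝ] ℝ => T v) (h3.unique h4)
  simp at h5 h1
  linarith

open Filter Topology in
lemma crit_const {p d : ℕ} {r rt : E p → ℝ} (hr : ContDiff ℝ 1 r) (hrt : ContDiff ℝ 1 rt)
    {g : E p → E p} (hg : Continuous g) (hgb : Function.Bijective g) {F1 Ft1 : E d → E p}
    (hF1c : Continuous F1) (hFt1c : Continuous Ft1) {J : E p → ℝ} (hJ : ∀ y, 0 < J y)
    (heq : ∀ y ξ, r (y - F1 ξ) = rt (g y - Ft1 ξ) * J y) (hF1s : Function.Surjective F1)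
    (hF1 : ∀ᵐ ξ, DifferentiableAt ℝ F1 ξ ∧ Function.Surjective (fderiv ℝ F1 ξ))
    (hFt1 : ∀ᵐ ξ, DifferentiableAt ℝ Ft1 ξ) (u0 : E p) (hu0 : fderiv ℝ r u0 = 0)
    (hiso : ∀ᶠ z in 𝓝[≠] u0, fderiv ℝ r z ≠ 0)
    (hspan : ∀ v, (∀ u, fderiv ℝ r u v = 0) → v = 0) :
    ∃ c, ∀ ξ, g (F1 ξ + u0) = Ft1 ξ + c := by
  have hrd : Differentiable ℝ r := hr.differentiable one_ne_zero
  have hrtd : Differentiable ℝ rt := hrt.differentiable one_ne_zero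
  have hcrit : ∀ᵐ ξ, ∀ y, fderiv ℝ r (y - F1 ξ) = 0 ↔ fderiv ℝ rt (g y - Ft1 ξ) = 0 := by
    filter_upwards [hF1, hFt1] with ξ hξ hξt
    have hder : ∀ y h, fderiv ℝ r (y - F1 ξ) (fderiv ℝ F1 ξ h)
        = J y * fderiv ℝ rt (g y - Ft1 ξ) (fderiv ℝ Ft1 ξ h) := by
      intro y h
      have h1 : HasFDerivAt (fun ξ => r (y - F1 ξ))
          ((fderiv ℝ r (y - F1 ξ)).comp (-(fderiv ℝ F1 ξ))) ξ :=
        (hrd (y - F1 ξ)).hasFDerivAt.comp ξ (hξ.1.hasFDerivAt.const_sub y)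
      have h2 : HasFDerivAt (fun ξ => rt (g y - Ft1 ξ))
          ((fderiv ℝ rt (g y - Ft1 ξ)).comp (-(fderiv ℝ Ft1 ξ))) ξ :=
        (hrtd (g y - Ft1 ξ)).hasFDerivAt.comp ξ (hξt.hasFDerivAt.const_sub (g y))
      have h3 := h2.mul_const (J y)
      have h4 : (fun ξ => r (y - F1 ξ)) = fun ξ => rt (g y - Ft1 ξ) * J y := funext (heq y)
      rw [h4] at h1
      have h5 := congrArg (fun T : E d →L[ℝ] ℝ => T h) (h1.unique h3)
      simp at h5
      exact h5
    have hts : Function.Surjective (fderiv ℝ Ft1 ξ) := by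
      refine surj_of_ker hξ.2 fun x hx => hspan _ fun u => ?_
      have := hder (u + F1 ξ) x
      rw [hx] at this
      simpa using this
    intro y
    constructor
    · intro h0
      ext1 v
      obtain ⟨h, rfl⟩ := hts v
      have := hder y h
      rw [h0] at this
      simpa [(hJ y).ne'] using this.symm
    · intro h0
      ext1 v
      obtain ⟨h, rfl⟩ := hξ.2 v
      rw [hder y h, h0]
      simp
  set ut : E d → E p := fun ξ => g (F1 ξ + u0) - Ft1 ξ with hut
  have hutc : Continuous ut := by fun_prop
  have hzero : ∀ ξ, fderiv ℝ rt (ut ξ) = 0 := by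
    have hc1 : Continuous fun ξ => fderiv ℝ rt (ut ξ) := (hrt.continuous_fderiv one_ne_zero).comp hutc
    have hae : (fun ξ => fderiv ℝ rt (ut ξ)) =ᵐ[volume] fun _ => 0 := by
      filter_upwards [hcrit] with ξ hξ
      refine (hξ (F1 ξ + u0)).mp ?_
      simpa using hu0
    have := (Continuous.ae_eq_iff_eq volume hc1 continuous_const).mp hae
    exact fun ξ => congrFun this ξ
  obtain ⟨O, hO, hOn, hOmap⟩ := baire_open g hg hgb
  have hopen : IsOpen {ξ | F1 ξ + u0 ∈ O} := hO.preimage (by fun_prop)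
  obtain ⟨ξ0, hξ0O, hξ0⟩ : ∃ ξ0, F1 ξ0 + u0 ∈ O ∧
      ∀ y, fderiv ℝ r (y - F1 ξ0) = 0 ↔ fderiv ℝ rt (g y - Ft1 ξ0) = 0 := by
    have hne : {ξ | F1 ξ + u0 ∈ O}.Nonempty := by
      obtain ⟨o, ho⟩ := hOn
      obtain ⟨ξ, hξ⟩ := hF1s (o - u0)
      exact ⟨ξ, by simpa [hξ] using ho⟩
    have hd := Measure.dense_of_ae hcrit
    obtain ⟨ξ, h1, h2⟩ := hd.inter_open_nonempty _ hopen hne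
    exact ⟨ξ, h1, h2⟩
  have hisot : ∀ᶠ w in 𝓝 (ut ξ0), fderiv ℝ rt w = 0 → w = ut ξ0 := by
    have h1 : ∀ᶠ y in 𝓝 (F1 ξ0 + u0), fderiv ℝ rt (g y - Ft1 ξ0) = 0 → g y - Ft1 ξ0 = ut ξ0 := by
      rw [eventually_nhdsWithin_iff] at hiso
      have ht : Tendsto (fun y => y - F1 ξ0) (𝓝 (F1 ξ0 + u0)) (𝓝 u0) := by
        have h : Continuous (fun y : E p => y - F1 ξ0) := by fun_prop
        simpa using h.tendsto (F1 ξ0 + u0)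
      filter_upwards [ht.eventually hiso] with y hy h0
      have h2 := (hξ0 y).mpr h0
      by_cases hyu : y - F1 ξ0 = u0
      · simp [hut, ← hyu]
      · exact absurd h2 (hy hyu)
    have h2 : ∀ᶠ z in 𝓝 (g (F1 ξ0 + u0)), fderiv ℝ rt (z - Ft1 ξ0) = 0 → z - Ft1 ξ0 = ut ξ0 := by
      rw [← hOmap _ hξ0O, eventually_map]
      exact h1
    have ht : Tendsto (fun w => w + Ft1 ξ0) (𝓝 (ut ξ0)) (𝓝 (g (F1 ξ0 + u0))) := by
      have h : Continuous (fun w : E p => w + Ft1 ξ0) := by fun_prop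
      simpa [hut] using h.tendsto (ut ξ0)
    filter_upwards [ht.eventually h2] with w hw
    simpa using hw
  have hclopen : IsClopen (ut ⁻¹' {ut ξ0}) := by
    refine ⟨isClosed_singleton.preimage hutc, ?_⟩
    obtain ⟨N, hN, hNo, hmem⟩ := mem_nhds_iff.mp hisot
    have : ut ⁻¹' {ut ξ0} = ut ⁻¹' N := by
      ext ξ
      constructor
      · intro h
        have h' : ut ξ = ut ξ0 := h
        change ut ξ ∈ N
        rw [h']; exact hmem
      · intro h
        exact hN h (hzero ξ)
    rw [this]
    exact hNo.preimage hutc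
  have huniv := hclopen.eq_univ ⟨ξ0, rfl⟩
  refine ⟨ut ξ0, fun ξ => ?_⟩
  have : ut ξ = ut ξ0 := by
    have h : ξ ∈ ut ⁻¹' {ut ξ0} := huniv ▸ Set.mem_univ ξ
    exact h
  rw [← this]
  simp [hut]

lemma clm_det_comp {p : ℕ} (A B : E p →L[ℝ] E p) : (A.comp B).det = A.det * B.det :=
  LinearMap.det_comp A.toLinearMap B.toLinearMap

open Filter Topology in
/-- The homoskedastic identification result. -/
theorem core {p d : ℕ} {f0 ft0 h0 : E p → E p} (hf0 : LocallyLipschitz f0)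
    (hl : ∀ x, h0 (f0 x) = x) (hrinv : ∀ y, f0 (h0 y) = y) (hh0 : Continuous h0) (hf00 : f0 0 = 0)
    (hf0det : ∀ᵐ z, DifferentiableAt ℝ f0 z ∧ (fderiv ℝ f0 z).det ≠ 0)
    (hft0 : Continuous ft0) (hft0b : Function.Bijective ft0) (hft00 : ft0 0 = 0)
    (hft0det : ∀ᵐ z, DifferentiableAt ℝ ft0 z ∧ (fderiv ℝ ft0 z).det ≠ 0)
    {F1 Ft1 : E d → E p} (hF1c : Continuous F1) (hFt1l : LocallyLipschitz Ft1)
    (hF1s : Function.Surjective F1)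
    (hF1 : ∀ᵐ ξ, DifferentiableAt ℝ F1 ξ ∧ Function.Surjective (fderiv ℝ F1 ξ))
    {ρ ρt : E p → ℝ} (hρ : AdmissibleDensity ρ) (hmax : LocalMaxCondition ρ)
    (hρt : AdmissibleDensity ρt)
    (heq : ∀ᵐ w : E p × E d, ρ (f0 w.1 - F1 w.2) * |(fderiv ℝ f0 w.1).det|
      = ρt (ft0 w.1 - Ft1 w.2) * |(fderiv ℝ ft0 w.1).det|) :
    ∃ M : Matrix (Fin p) (Fin p) ℝ, M * Mᵀ = 1 ∧ (∀ z, ft0 z = mulVecE M (f0 z)) ∧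
      ∀ ξ, Ft1 ξ = mulVecE M (F1 ξ) := by
  have hFt1c : Continuous Ft1 := hFt1l.continuous
  have hf0c : Continuous f0 := hf0.continuous
  have hf0s : Function.Surjective f0 := fun y => ⟨h0 y, hrinv y⟩
  have hρc : Continuous ρ := hρ.1.continuous
  have hρtc : Continuous ρt := hρt.1.continuous
  have hρp := hρ.2.1
  have hρtp := hρt.2.1
  have hA : ∀ᵐ ξ, ∀ x, ρ (f0 ξ - F1 x) * |(fderiv ℝ f0 ξ).det|
      = ρt (ft0 ξ - Ft1 x) * |(fderiv ℝ ft0 ξ).det| := by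
    have h1 := Measure.ae_ae_of_ae_prod heq
    filter_upwards [h1] with ξ hξ
    have := (Continuous.ae_eq_iff_eq volume (f := fun x => ρ (f0 ξ - F1 x) * |(fderiv ℝ f0 ξ).det|)
      (g := fun x => ρt (ft0 ξ - Ft1 x) * |(fderiv ℝ ft0 ξ).det|) (by fun_prop) (by fun_prop)).mp hξ
    exact fun x => congrFun this x
  set κ : E p → ℝ := fun ξ => ρ (f0 ξ - F1 0) / ρt (ft0 ξ - Ft1 0) with hκ
  have hκc : Continuous κ := Continuous.div (by fun_prop) (by fun_prop) fun ξ => (hρtp _).ne'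
  have hκp : ∀ ξ, 0 < κ ξ := fun ξ => div_pos (hρp _) (hρtp _)
  have hκd : ∀ᵐ ξ, |(fderiv ℝ ft0 ξ).det| = κ ξ * |(fderiv ℝ f0 ξ).det| := by
    filter_upwards [hA] with ξ hξ
    have := hξ 0
    simp only [hκ]
    rw [div_mul_eq_mul_div, this, mul_div_cancel_left₀ _ (hρtp _).ne']
  have hall : ∀ ξ x, ρ (f0 ξ - F1 x) = ρt (ft0 ξ - Ft1 x) * κ ξ := by
    intro ξ x
    have hae : (fun ξ => ρ (f0 ξ - F1 x)) =ᵐ[volume] fun ξ => ρt (ft0 ξ - Ft1 x) * κ ξ := by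
      filter_upwards [hA, hκd, hf0det] with ξ h1 h2 h3
      have h4 := h1 x
      rw [h2, ← mul_assoc] at h4
      exact mul_right_cancel₀ (abs_ne_zero.mpr h3.2) h4
    have := (Continuous.ae_eq_iff_eq volume (by fun_prop) (by fun_prop)).mp hae
    exact congrFun this ξ
  set g : E p → E p := fun y => ft0 (h0 y) with hgdef
  have hgc : Continuous g := hft0.comp hh0
  have hgb : Function.Bijective g := by
    refine hft0b.comp ⟨fun x y hxy => ?_, fun x => ⟨f0 x, hl x⟩⟩
    rw [← hrinv x, hxy, hrinv]
  set J : E p → ℝ := fun y => κ (h0 y) with hJdef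
  have hgall : ∀ y x, ρ (y - F1 x) = ρt (g y - Ft1 x) * J y := by
    intro y x
    have := hall (h0 y) x
    rwa [hrinv] at this
  have hgood : ∀ᵐ y, ∃ g' : E p →L[ℝ] E p, HasFDerivAt g g' y ∧ |g'.det| = J y := by
    have h1 : ∀ᵐ ξ, ∃ g' : E p →L[ℝ] E p, HasFDerivAt g g' (f0 ξ) ∧ |g'.det| = J (f0 ξ) := by
      filter_upwards [hf0det, hft0det, hκd] with ξ h1 h2 h3
      set A := (fderiv ℝ f0 ξ).toContinuousLinearEquivOfDetNeZero h1.2 with hAdef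
      have hA1 : (A : E p →L[ℝ] E p) = fderiv ℝ f0 ξ :=
        ContinuousLinearMap.coe_toContinuousLinearEquivOfDetNeZero _ _
      have hd : HasFDerivAt f0 (A : E p →L[ℝ] E p) (h0 (f0 ξ)) := by
        rw [hA1, hl]; exact h1.1.hasFDerivAt
      have hinv : HasFDerivAt h0 (A.symm : E p →L[ℝ] E p) (f0 ξ) :=
        HasFDerivAt.of_local_left_inverse hh0.continuousAt hd (Eventually.of_forall hrinv)
      have hd2 : HasFDerivAt ft0 (fderiv ℝ ft0 ξ) (h0 (f0 ξ)) := by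
        rw [hl]; exact h2.1.hasFDerivAt
      refine ⟨_, hd2.comp (f0 ξ) hinv, ?_⟩
      have hdet : ((fderiv ℝ ft0 ξ).comp (A.symm : E p →L[ℝ] E p)).det * (fderiv ℝ f0 ξ).det
          = (fderiv ℝ ft0 ξ).det := by
        rw [← clm_det_comp, ← hA1]
        congr 1
        ext1 v
        simp
      simp only [hJdef, hl]
      have h5 := congrArg abs hdet
      rw [abs_mul, h3] at h5
      exact mul_right_cancel₀ (abs_ne_zero.mpr h1.2) h5
    filter_upwards [ae_image hf0 hf0s h1] with y hy
    obtain ⟨x, rfl, h⟩ := hy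
    exact h
  obtain ⟨u0, hu0max, hu0C, hu0neg⟩ := hmax
  obtain ⟨⟨L, hL⟩, hiso⟩ := exists_normal_form hρ.1 hu0max hu0C hu0neg
  obtain ⟨c, hc⟩ := crit_const hρ.1 hρt.1 hgc hgb hF1c hFt1c (J := J) (fun y => hκp _) hgall hF1s hF1
    (locLip_ae_diff hFt1l) u0 hu0max.fderiv_eq_zero hiso (span_fderiv hu0C hu0neg)
  have hφ' : ∀ x y, ρ (u0 + (y - x)) = ρt (c + (g y - g x)) * J y := by
    intro x y
    obtain ⟨ξ, hξ⟩ := hF1s (x - u0)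
    have h1 := hgall y ξ
    have h2 := hc ξ
    rw [hξ, sub_add_cancel] at h2
    rw [hξ] at h1
    rw [show u0 + (y - x) = y - (x - u0) by abel, h1, h2]
    congr 2
    abel
  have hJc : ∀ y, J y = ρ u0 / ρt c := by
    intro y
    have := hφ' y y
    simp only [sub_self, add_zero] at this
    rw [this, mul_div_cancel_left₀ _ (hρtp _).ne']
  set J0 := ρ u0 / ρt c with hJ0
  have hJ0p : 0 < J0 := div_pos (hρp _) (hρtp _)
  simp only [hJc] at hφ' hgood
  obtain ⟨O, hO, hOn, hOmap⟩ := baire_open g hgc hgb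
  obtain ⟨y0, hy0O, G, hG, hGdet⟩ := (Measure.dense_of_ae hgood).inter_open_nonempty O hO hOn
  have hGne : G.det ≠ 0 := by intro h; rw [h, abs_zero] at hGdet; exact hJ0p.ne hGdet
  set Ge := G.toContinuousLinearEquivOfDetNeZero hGne with hGe
  have hGe1 : (Ge : E p →L[ℝ] E p) = G :=
    ContinuousLinearMap.coe_toContinuousLinearEquivOfDetNeZero _ _
  have hGe2 : ∀ x, G (Ge.symm x) = x := by intro x; rw [← hGe1]; simp
  have hGe3 : ∀ x, Ge.symm (G x) = x := by intro x; rw [← hGe1]; simp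
  set k : E p → E p := fun a => L (Ge.symm (g (L.symm a))) with hk
  have hkc : Continuous k := by fun_prop
  have hkb : Function.Bijective k :=
    L.bijective.comp (Ge.symm.bijective.comp (hgb.comp L.symm.bijective))
  have hkiso : Isometry k := by
    refine isom_of k hkc hkb (fun t => ρ u0 - ρ (u0 + L.symm t))
      (fun w => ρ u0 - ρt (c + G (L.symm w)) * J0) ?_ hL (L y0) ?_ ?_ ?_
    · intro a b
      simp only [hk, map_sub, ContinuousLinearEquiv.symm_apply_apply, hGe2]
      rw [hφ']
    · have h1 : HasFDerivAt g G (L.symm (L y0)) := by simpa using hG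
      have h2 := L.hasFDerivAt.comp (L y0) (Ge.symm.hasFDerivAt.comp (L y0)
        (h1.comp (L y0) L.symm.hasFDerivAt))
      refine h2.congr_fderiv ?_
      ext1 v
      simp [hGe3]
    · have h1 : map L.symm (𝓝 (L y0)) = 𝓝 y0 := by
        have := L.symm.toHomeomorph.map_nhds_eq (L y0)
        simpa using this
      have h2 : map (fun x => L (Ge.symm x)) (𝓝 (g y0)) = 𝓝 (L (Ge.symm (g y0))) :=
        (Ge.symm.trans L).toHomeomorph.map_nhds_eq (g y0)
      have h3 : k = (fun x => L (Ge.symm x)) ∘ g ∘ L.symm := rfl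
      rw [h3, ← Filter.map_map, ← Filter.map_map, h1, hOmap y0 hy0O, h2]
      simp
    · have hLl : LocallyLipschitz L := (L : E p →L[ℝ] E p).lipschitz.locallyLipschitz
      filter_upwards [ae_image hLl L.surjective hgood] with a ha
      obtain ⟨y, rfl, g', hg', hg'd⟩ := ha
      have h1 : HasFDerivAt g g' (L.symm (L y)) := by simpa using hg'
      have h2 := L.hasFDerivAt.comp (L y) (Ge.symm.hasFDerivAt.comp (L y)
        (h1.comp (L y) L.symm.hasFDerivAt))
      refine ⟨_, h2, ?_⟩
      have e1 : (L : E p →L[ℝ] E p).det * (L.symm : E p →L[ℝ] E p).det = 1 := by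
        rw [← clm_det_comp]; simp [ContinuousLinearMap.det]
      have e2 : G.det * (Ge.symm : E p →L[ℝ] E p).det = 1 := by
        rw [← clm_det_comp, ← hGe1]; simp [ContinuousLinearMap.det]
      rw [clm_det_comp, clm_det_comp, clm_det_comp]
      rw [show (L : E p →L[ℝ] E p).det * ((Ge.symm : E p →L[ℝ] E p).det * (g'.det *
          (L.symm : E p →L[ℝ] E p).det)) = ((L : E p →L[ℝ] E p).det * (L.symm : E p →L[ℝ] E p).det) *
          ((Ge.symm : E p →L[ℝ] E p).det * g'.det) by ring, e1, one_mul, abs_mul, hg'd, ← hGdet,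
          ← abs_mul, mul_comm, e2, abs_one]
  set K := (IsometryEquiv.mk (Equiv.ofBijective k hkb) hkiso).toRealAffineIsometryEquiv with hK
  have hKk : ∀ a, k a = K.linearIsometryEquiv a + k 0 := by
    intro a
    have h1 : ∀ a, K a = k a := fun a => rfl
    have := K.map_vadd 0 a
    simp only [vadd_eq_add, add_zero] at this
    rw [← h1, ← h1, this]
  set T : E p →L[ℝ] E p := G.comp ((L.symm : E p →L[ℝ] E p).comp
    ((K.linearIsometryEquiv.toContinuousLinearEquiv : E p →L[ℝ] E p).comp (L : E p →L[ℝ] E p)))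
    with hT
  have hg0 : g 0 = 0 := by
    have : h0 0 = 0 := by have h := hl 0; rwa [hf00] at h
    simp [hgdef, this, hft00]
  have hgk : ∀ y, g y = G (L.symm (k (L y))) := by
    intro y; simp [hk, hGe2]
  have hgT : ∀ y, g y = T y := by
    have hk0 : G (L.symm (k 0)) = 0 := by
      have := hgk 0
      rw [hg0, map_zero] at this
      exact this.symm
    intro y
    rw [hgk, hKk, map_add, map_add, hk0, add_zero]
    rfl
  have hTG : T = G := by
    have : HasFDerivAt g T y0 := by
      have h : g = T := funext hgT
      rw [h]; exact T.hasFDerivAt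
    exact this.unique hG
  obtain ⟨M, hM⟩ := exists_cl T
  have hgM : ∀ y, g y = mulVecE M y := by
    intro y; rw [hgT, hM, cl_apply]
  have hMdet : |M.det| = J0 := by rw [← cl_det, ← hM, hTG, hGdet]
  have hMne : M.det ≠ 0 := by intro h; rw [h, abs_zero] at hMdet; exact hJ0p.ne hMdet
  obtain ⟨hb, hMM⟩ := moments hρ hρt M hMne (c - mulVecE M u0) (by
    intro u
    have := hφ' u0 u
    rw [hgM, hgM] at this
    rw [hMdet, show mulVecE M u + (c - mulVecE M u0) = c + (mulVecE M u - mulVecE M u0) by abel,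
      ← this]
    congr 1
    abel)
  refine ⟨M, hMM, fun z => ?_, fun ξ => ?_⟩
  · rw [← hgM]
    simp [hgdef, hl]
  · have h1 := hc ξ
    rw [hgM, ← cl_apply, map_add, cl_apply, cl_apply, ← sub_eq_zero.mp hb] at h1
    exact (add_right_cancel h1).symm

lemma comp_cl_fderiv {n p : ℕ} (A : Matrix (Fin p) (Fin p) ℝ) {f : E n → E p} {z : E n}
    (h : DifferentiableAt ℝ f z) :
    DifferentiableAt ℝ (fun x => mulVecE A (f x)) z ∧
      fderiv ℝ (fun x => mulVecE A (f x)) z = (cl A).comp (fderiv ℝ f z) := by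
  have := (cl A).hasFDerivAt.comp z h.hasFDerivAt
  exact ⟨this.differentiableAt, this.fderiv⟩

lemma comp_cl_locLip {n p : ℕ} (A : Matrix (Fin p) (Fin p) ℝ) {f : E n → E p}
    (h : LocallyLipschitz f) : LocallyLipschitz (fun x => mulVecE A (f x)) :=
  (cl A).lipschitz.locallyLipschitz.comp h

lemma diag_facts {p : ℕ} {S : Matrix (Fin p) (Fin p) ℝ} (hd : S.IsDiag) (hpos : ∀ i, 0 < S i i) :
    S.det ≠ 0 ∧ Sᵀ = S := by
  have h : S = Matrix.diagonal (fun i => S i i) := by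
    have := hd.diagonal_diag
    exact this.symm
  constructor
  · rw [h, Matrix.det_diagonal]
    exact Finset.prod_ne_zero_iff.mpr fun i _ => (hpos i).ne'
  · rw [h, Matrix.diagonal_transpose]

lemma mulVecE_inv_left {p : ℕ} {S : Matrix (Fin p) (Fin p) ℝ} (h : S.det ≠ 0) (x : E p) :
    mulVecE S⁻¹ (mulVecE S x) = x := by
  rw [← mulVecE_mul, Matrix.nonsing_inv_mul S (isUnit_iff_ne_zero.mpr h), mulVecE_one]

lemma mulVecE_inv_right {p : ℕ} {S : Matrix (Fin p) (Fin p) ℝ} (h : S.det ≠ 0) (x : E p) :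
    mulVecE S (mulVecE S⁻¹ x) = x := by
  rw [← mulVecE_mul, Matrix.mul_nonsing_inv S (isUnit_iff_ne_zero.mpr h), mulVecE_one]

lemma ae_comp_det {p : ℕ} {S : Matrix (Fin p) (Fin p) ℝ} (h : S.det ≠ 0) {f : E p → E p}
    (hf : ∀ᵐ z, DifferentiableAt ℝ f z ∧ (fderiv ℝ f z).det ≠ 0) :
    ∀ᵐ z, DifferentiableAt ℝ (fun x => mulVecE S (f x)) z ∧
      (fderiv ℝ (fun x => mulVecE S (f x)) z).det ≠ 0 := by
  filter_upwards [hf] with z hz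
  obtain ⟨h1, h2⟩ := comp_cl_fderiv S hz.1
  refine ⟨h1, ?_⟩
  rw [h2, clm_det_comp, cl_det]
  exact mul_ne_zero h hz.2

lemma inv_det_ne {p : ℕ} {S : Matrix (Fin p) (Fin p) ℝ} (h : S.det ≠ 0) : S⁻¹.det ≠ 0 := by
  rw [Matrix.det_nonsing_inv, Ring.inverse_eq_inv']
  exact inv_ne_zero h

/-- Identification at a fixed value of the exogenous arguments. -/
lemma per_point {p d : ℕ} {f0 ft0 : E p → E p} (hf0 : LocallyLipschitz f0)
    (hf0b : Function.Bijective f0) (hf00 : f0 0 = 0)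
    (hinv : LocallyLipschitz (Function.invFun f0))
    (hf0det : ∀ᵐ z, DifferentiableAt ℝ f0 z ∧ (fderiv ℝ f0 z).det ≠ 0)
    (hft0 : LocallyLipschitz ft0) (hft0b : Function.Bijective ft0) (hft00 : ft0 0 = 0)
    (hft0det : ∀ᵐ z, DifferentiableAt ℝ ft0 z ∧ (fderiv ℝ ft0 z).det ≠ 0)
    {F1 Ft1 : E d → E p} (hF1c : LocallyLipschitz F1) (hFt1l : LocallyLipschitz Ft1)
    (hF1s : Function.Surjective F1)
    (hF1 : ∀ᵐ ξ, DifferentiableAt ℝ F1 ξ ∧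
      LinearMap.rank (fderiv ℝ F1 ξ).toLinearMap = (p : Cardinal))
    {ρ ρt : E p → ℝ} (hρ : AdmissibleDensity ρ) (hmax : LocalMaxCondition ρ)
    (hρt : AdmissibleDensity ρt)
    {S St : Matrix (Fin p) (Fin p) ℝ} (hS : S.IsDiag) (hSp : ∀ i, 0 < S i i)
    (hSt : St.IsDiag) (hStp : ∀ i, 0 < St i i)
    (heq : ∀ᵐ w : E p × E d, ρ (mulVecE S⁻¹ (f0 w.1 - F1 w.2)) * |S⁻¹.det * (fderiv ℝ f0 w.1).det|
      = ρt (mulVecE St⁻¹ (ft0 w.1 - Ft1 w.2)) * |St⁻¹.det * (fderiv ℝ ft0 w.1).det|) :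
    ∃ G : Matrix (Fin p) (Fin p) ℝ, (∀ z, ft0 z = mulVecE G (f0 z)) ∧
      (∀ ξ, Ft1 ξ = mulVecE G (F1 ξ)) ∧ St * St = G * (S * S) * Gᵀ := by
  obtain ⟨hSd, hSs⟩ := diag_facts hS hSp
  obtain ⟨hStd, hSts⟩ := diag_facts hSt hStp
  have hSd' := inv_det_ne hSd
  have hStd' := inv_det_ne hStd
  have hli : ∀ x, Function.invFun f0 (f0 x) = x := Function.leftInverse_invFun hf0b.1
  have hri : ∀ x, f0 (Function.invFun f0 x) = x := Function.rightInverse_invFun hf0b.2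
  obtain ⟨M, hM, hM0, hM1⟩ := core (f0 := fun x => mulVecE S⁻¹ (f0 x))
    (ft0 := fun x => mulVecE St⁻¹ (ft0 x)) (h0 := fun y => Function.invFun f0 (mulVecE S y))
    (F1 := fun x => mulVecE S⁻¹ (F1 x)) (Ft1 := fun x => mulVecE St⁻¹ (Ft1 x))
    (ρ := ρ) (ρt := ρt)
    (comp_cl_locLip _ hf0)
    (fun x => by simp only [mulVecE_inv_right hSd, hli])
    (fun y => by simp only [hri, mulVecE_inv_left hSd])
    (hinv.continuous.comp (cl S).continuous)
    (by simp only [hf00, mulVecE_zero])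
    (ae_comp_det hSd' hf0det)
    (comp_cl_locLip _ hft0).continuous
    ⟨fun x y hxy => hft0b.1 (by
        have := congrArg (mulVecE St) hxy
        simpa only [mulVecE_inv_right hStd] using this),
      fun y => by
        obtain ⟨x, hx⟩ := hft0b.2 (mulVecE St y)
        exact ⟨x, by simp only [hx, mulVecE_inv_left hStd]⟩⟩
    (by simp only [hft00, mulVecE_zero])
    (ae_comp_det hStd' hft0det)
    (comp_cl_locLip _ hF1c).continuous
    (comp_cl_locLip _ hFt1l)
    (fun y => by
        obtain ⟨x, hx⟩ := hF1s (mulVecE S y)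
        exact ⟨x, by simp only [hx, mulVecE_inv_left hSd]⟩)
    (by
      filter_upwards [hF1] with ξ hξ
      obtain ⟨h1, h2⟩ := comp_cl_fderiv S⁻¹ hξ.1
      refine ⟨h1, fun y => ?_⟩
      obtain ⟨x, hx⟩ := surj_of_rank hξ.2 (mulVecE S y)
      refine ⟨x, ?_⟩
      rw [h2, ContinuousLinearMap.comp_apply, hx, cl_apply, mulVecE_inv_left hSd])
    hρ hmax hρt
    (by
      have a1 := (Measure.quasiMeasurePreserving_fst
        (μ := (volume : Measure (E p))) (ν := (volume : Measure (E d)))).ae hf0det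
      have a2 := (Measure.quasiMeasurePreserving_fst
        (μ := (volume : Measure (E p))) (ν := (volume : Measure (E d)))).ae hft0det
      filter_upwards [heq, a1, a2] with w hw h1 h2
      rw [(comp_cl_fderiv S⁻¹ h1.1).2, (comp_cl_fderiv St⁻¹ h2.1).2, clm_det_comp, clm_det_comp,
        cl_det, cl_det, ← mulVecE_sub, ← mulVecE_sub]
      exact hw)
  refine ⟨St * M * S⁻¹, fun z => ?_, fun ξ => ?_, ?_⟩
  · rw [mulVecE_mul, mulVecE_mul, ← hM0, mulVecE_inv_right hStd]
  · rw [mulVecE_mul, mulVecE_mul, ← hM1, mulVecE_inv_right hStd]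
  · rw [Matrix.transpose_mul, Matrix.transpose_mul, Matrix.transpose_nonsing_inv, hSs, hSts]
    have e1 := Matrix.nonsing_inv_mul S (isUnit_iff_ne_zero.mpr hSd)
    have e2 := Matrix.mul_nonsing_inv S (isUnit_iff_ne_zero.mpr hSd)
    calc St * St = St * (M * Mᵀ) * St := by rw [hM, mul_one]
      _ = St * M * (S⁻¹ * S) * (S * S⁻¹) * Mᵀ * St := by rw [e1, e2]; simp only [mul_one, mul_assoc]
      _ = _ := by simp only [mul_assoc]

/-- The product of Lebesgue measure with an arbitrary measure. -/
lemma prod_facts {d₂ dv : ℕ} (V : Set (E dv)) (μv : Measure (E dv)) (hμV : μv Vᶜ = 0)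
    (zstar : E d₂) (vstar : E dv)
    (hμvstar : ∀ U : Set (E dv), IsOpen U → vstar ∈ U → 0 < μv U) :
    (volume : Measure (E d₂)).prod μv = 0 ∨
    ((∀ᵐ q ∂((volume : Measure (E d₂)).prod μv), q.2 ∈ V) ∧
      ∀ U ∈ nhds (zstar, vstar), (volume : Measure (E d₂)).prod μv U ≠ 0) := by
  by_cases hm : AEMeasurable (fun x : E d₂ => Measure.map (Prod.mk x) μv) volume
  · right
    constructor
    · set T := toMeasurable μv Vᶜ with hT
      have hT0 : μv T = 0 := by rw [hT, measure_toMeasurable, hμV]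
      have hTm : MeasurableSet T := measurableSet_toMeasurable _ _
      rw [ae_iff]
      refine measure_mono_null (t := Prod.snd ⁻¹' T) (fun q hq => subset_toMeasurable μv Vᶜ hq) ?_
      rw [Measure.prod, Measure.bind_apply (measurable_snd hTm) hm]
      simp only [Measure.map_apply measurable_prodMk_left (measurable_snd hTm)]
      have : ∀ x : E d₂, Prod.mk x ⁻¹' (Prod.snd ⁻¹' T) = T := fun x => rfl
      simp [this, hT0]
    · intro U hU
      obtain ⟨A, hA, B, hB, hAB⟩ := mem_nhds_prod_iff.mp hU
      obtain ⟨A', hA', hAo, hAz⟩ := mem_nhds_iff.mp hA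
      obtain ⟨B', hB', hBo, hBz⟩ := mem_nhds_iff.mp hB
      intro h0
      have h1 : (volume : Measure (E d₂)).prod μv (A' ×ˢ B') = 0 :=
        measure_mono_null ((Set.prod_mono hA' hB').trans hAB) h0
      have hms : MeasurableSet (A' ×ˢ B') := hAo.measurableSet.prod hBo.measurableSet
      rw [Measure.prod, Measure.bind_apply hms hm] at h1
      simp only [Measure.map_apply measurable_prodMk_left hms] at h1
      have h2 : (∫⁻ x in A', μv B') ≤ ∫⁻ x : E d₂, μv (Prod.mk x ⁻¹' (A' ×ˢ B')) := by
        rw [← lintegral_indicator hAo.measurableSet]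
        refine lintegral_mono fun x => ?_
        by_cases hx : x ∈ A'
        · simp [hx]
        · simp [hx]
      rw [h1, setLIntegral_const] at h2
      have h3 := hAo.measure_pos volume ⟨_, hAz⟩
      have h4 := hμvstar B' hBo hBz
      have h5 : 0 < μv B' * volume A' := ENNReal.mul_pos h4.ne' h3.ne'
      exact absurd h5 (not_lt.mpr h2)
  · left
    rw [Measure.prod, Measure.bind, Measure.map_of_not_aemeasurable hm, Measure.join_zero]

open scoped MatrixOrder in
lemma sq_unique {p : ℕ} {A B : Matrix (Fin p) (Fin p) ℝ} (hA : A.PosSemidef) (hB : B.PosSemidef)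
    (h : A * A = B * B) : A = B := by
  have := (CFC.sq_eq_sq_iff A B hA.nonneg hB.nonneg).mp (by rw [sq, sq, h])
  exact this

lemma orth_det {p : ℕ} {Q : Matrix (Fin p) (Fin p) ℝ} (hQ : Q * Qᵀ = 1) : |Q.det| = 1 := by
  have := congrArg Matrix.det hQ
  rw [Matrix.det_mul, Matrix.det_transpose, Matrix.det_one] at this
  rcases mul_self_eq_one_iff.mp this with h | h <;> simp [h]

lemma diag_eq {p : ℕ} {S : Matrix (Fin p) (Fin p) ℝ} (hd : S.IsDiag) :
    S = Matrix.diagonal (fun i => S i i) := hd.diagonal_diag.symm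

lemma diag_posSemidef {p : ℕ} {S : Matrix (Fin p) (Fin p) ℝ} (hd : S.IsDiag)
    (hpos : ∀ i, 0 < S i i) : S.PosSemidef := by
  rw [diag_eq hd]
  exact Matrix.PosSemidef.diagonal (fun i => (hpos i).le)

lemma rot_diag_pos {p : ℕ} {S Q : Matrix (Fin p) (Fin p) ℝ} (hd : S.IsDiag)
    (hpos : ∀ i, 0 < S i i) (hQ : Q * Qᵀ = 1) (i : Fin p) :
    0 < (Q * (S * S) * Qᵀ) i i := by
  have e : (Q * (S * S) * Qᵀ) i i = ∑ j, Q i j * Q i j * (S j j * S j j) := by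
    conv_lhs => rw [diag_eq hd, Matrix.diagonal_mul_diagonal, Matrix.mul_apply]
    refine Finset.sum_congr rfl fun j _ => ?_
    rw [Matrix.mul_diagonal, Matrix.transpose_apply]
    ring
  rw [e]
  have h1 : ∑ j, Q i j * Q i j = 1 := by
    have := congrFun (congrFun hQ i) i
    simpa [Matrix.mul_apply] using this
  obtain ⟨j, hj⟩ : ∃ j, Q i j ≠ 0 := by
    by_contra hcon
    push Not at hcon
    simp [hcon] at h1
  refine Finset.sum_pos' (fun k _ => mul_nonneg (mul_self_nonneg _) (mul_self_nonneg _)) ⟨j, Finset.mem_univ j, ?_⟩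
  have := hpos j
  have : 0 < Q i j * Q i j := mul_self_pos.mpr hj
  positivity

/-- The rotated skedastic matrix. -/
def rotSked {p : ℕ} (Q S : Matrix (Fin p) (Fin p) ℝ) : Matrix (Fin p) (Fin p) ℝ :=
  Matrix.diagonal (fun i => Real.sqrt ((Q * (S * S) * Qᵀ) i i))

lemma rotSked_pos {p : ℕ} {S Q : Matrix (Fin p) (Fin p) ℝ} (hd : S.IsDiag)
    (hpos : ∀ i, 0 < S i i) (hQ : Q * Qᵀ = 1) (i : Fin p) : 0 < rotSked Q S i i := by
  simp only [rotSked, Matrix.diagonal_apply_eq]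
  exact Real.sqrt_pos.mpr (rot_diag_pos hd hpos hQ i)

lemma rotSked_isDiag {p : ℕ} (Q S : Matrix (Fin p) (Fin p) ℝ) : (rotSked Q S).IsDiag :=
  Matrix.isDiag_diagonal _

lemma rotSked_sq {p : ℕ} {S Q : Matrix (Fin p) (Fin p) ℝ} (hd : S.IsDiag)
    (hpos : ∀ i, 0 < S i i) (hQ : Q * Qᵀ = 1) (hdd : (Q * (S * S) * Qᵀ).IsDiag) :
    rotSked Q S * rotSked Q S = Q * (S * S) * Qᵀ := by
  rw [rotSked, Matrix.diagonal_mul_diagonal]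
  conv_rhs => rw [diag_eq hdd]
  congr 1
  ext i
  exact Real.mul_self_sqrt (rot_diag_pos hd hpos hQ i).le

lemma rotSked_conj {p : ℕ} {S Q : Matrix (Fin p) (Fin p) ℝ} (hd : S.IsDiag)
    (hpos : ∀ i, 0 < S i i) (hQ : Q * Qᵀ = 1) (hdd : (Q * (S * S) * Qᵀ).IsDiag) :
    Qᵀ * (rotSked Q S)⁻¹ * Q = S⁻¹ := by
  have hQ2 : Qᵀ * Q = 1 := mul_eq_one_comm.mp hQ
  have hsq := rotSked_sq hd hpos hQ hdd
  have hTp := rotSked_pos hd hpos hQ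
  have hTd := rotSked_isDiag Q S
  generalize rotSked Q S = T at *
  have hTS : Qᵀ * T * Q = S := by
    refine sq_unique ?_ (diag_posSemidef hd hpos) ?_
    · have := (diag_posSemidef hTd hTp).conjTranspose_mul_mul_same Q
      simpa [Matrix.conjTranspose_eq_transpose_of_trivial] using this
    · calc Qᵀ * T * Q * (Qᵀ * T * Q) = Qᵀ * T * (Q * Qᵀ) * T * Q := by simp only [mul_assoc]
        _ = Qᵀ * (T * T) * Q := by rw [hQ]; simp only [mul_assoc, one_mul]
        _ = (Qᵀ * Q) * (S * S) * (Qᵀ * Q) := by rw [hsq]; simp only [mul_assoc]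
        _ = S * S := by rw [hQ2]; simp
  have hTu : T * T⁻¹ = 1 :=
    Matrix.mul_nonsing_inv T (isUnit_iff_ne_zero.mpr (diag_facts hTd hTp).1)
  symm
  apply Matrix.inv_eq_right_inv
  calc S * (Qᵀ * T⁻¹ * Q) = Qᵀ * T * (Q * Qᵀ) * T⁻¹ * Q := by
        rw [← hTS]; simp only [mul_assoc]
    _ = Qᵀ * (T * T⁻¹) * Q := by rw [hQ]; simp only [mul_assoc, one_mul]
    _ = 1 := by rw [hTu, mul_one, hQ2]

lemma rotSked_sked {p d₂ dv : ℕ} {σ : E d₂ × E dv → Matrix (Fin p) (Fin p) ℝ}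
    {q0 : E d₂ × E dv} (hσ : SkedasticFn2 σ q0) {Q : Matrix (Fin p) (Fin p) ℝ}
    (hQ : Q * Qᵀ = 1) : SkedasticFn2 (fun q => rotSked Q (σ q)) q0 := by
  obtain ⟨h1, h2, h3, h4⟩ := hσ
  refine ⟨fun q => rotSked_isDiag _ _, fun q i => rotSked_pos (h1 q) (h2 q) hQ i, ?_, ?_⟩
  · simp only [h3, rotSked, mul_one, hQ, Matrix.one_apply_eq, Real.sqrt_one]
    exact Matrix.diagonal_one
  · have hc : Continuous (fun S : Matrix (Fin p) (Fin p) ℝ => rotSked Q S) := by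
      unfold rotSked
      refine Continuous.matrix_diagonal ?_
      refine continuous_pi fun i => Real.continuous_sqrt.comp ?_
      refine Continuous.matrix_elem ?_ i i
      fun_prop
    exact hc.continuousAt.comp h4

lemma rot_fderiv {p : ℕ} {Q S : Matrix (Fin p) (Fin p) ℝ} (hd : S.IsDiag)
    (hpos : ∀ i, 0 < S i i) (hQ : Q * Qᵀ = 1) (hdd : (Q * (S * S) * Qᵀ).IsDiag)
    {f0 ft0 : E p → E p} (h : ∀ z, ft0 z = mulVecE Q (f0 z)) {z : E p}
    (hz : DifferentiableAt ℝ f0 z) :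
    |S⁻¹.det * (fderiv ℝ f0 z).det| = |(rotSked Q S)⁻¹.det * (fderiv ℝ ft0 z).det| := by
  have e : ft0 = fun z => mulVecE Q (f0 z) := funext h
  rw [e, (comp_cl_fderiv Q hz).2, clm_det_comp, cl_det, ← rotSked_conj hd hpos hQ hdd,
    Matrix.det_mul, Matrix.det_mul, Matrix.det_transpose]
  simp only [abs_mul, orth_det hQ, one_mul, mul_one]

/-- **Identification of the extended (heteroskedastic, endogenously nonlinear) SVAR**
(Theorem `thm:svarhetero`), stated as the equivalence together with the `moreover` clause
identifying `σ̃²`. -/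
theorem svar_heteroskedastic_identification
    (p d₁ d₂ dv : ℕ) (hp : 1 ≤ p) (hd₁ : 1 ≤ d₁) (hd₂ : 1 ≤ d₂) (hdv : 1 ≤ dv)
    (V : Set (E dv)) (μv : Measure (E dv)) (hμV : μv Vᶜ = 0)
    (zstar : E d₂) (vstar : E dv) (hvstar : vstar ∈ V)
    (hμvstar : ∀ U : Set (E dv), IsOpen U → vstar ∈ U → 0 < μv U)
    (f₀ : E p → E p) (hf₀lip : LocallyLipschitz f₀) (hf₀bij : Function.Bijective f₀)
    (hf₀0 : f₀ 0 = 0) (hf₀inv : LocallyLipschitz (Function.invFun f₀))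
    (hf₀det : ∀ᵐ z : E p, DifferentiableAt ℝ f₀ z ∧ (fderiv ℝ f₀ z).det ≠ 0)
    (f₁ : E d₁ → E d₂ → E dv → E p)
    (hf₁lip : ∀ (z2 : E d₂), ∀ v ∈ V, LocallyLipschitz (fun z1 => f₁ z1 z2 v))
    (hf₁surj : ∀ (z2 : E d₂), ∀ v ∈ V, Function.Surjective (fun z1 => f₁ z1 z2 v))
    (hf₁rank : ∀ (z2 : E d₂), ∀ v ∈ V, ∀ᵐ z1 : E d₁,
      DifferentiableAt ℝ (fun z1' => f₁ z1' z2 v) z1 ∧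
      LinearMap.rank (fderiv ℝ (fun z1' => f₁ z1' z2 v) z1).toLinearMap = (p : Cardinal))
    (ρ : E p → ℝ) (hρ : AdmissibleDensity ρ) (hρmax : LocalMaxCondition ρ)
    (σ : E d₂ × E dv → Matrix (Fin p) (Fin p) ℝ) (hσ : SkedasticFn2 σ (zstar, vstar))
    (ft₀ : E p → E p) (hft₀lip : LocallyLipschitz ft₀) (hft₀bij : Function.Bijective ft₀)
    (hft₀0 : ft₀ 0 = 0)
    (hft₀det : ∀ᵐ z : E p, DifferentiableAt ℝ ft₀ z ∧ (fderiv ℝ ft₀ z).det ≠ 0)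
    (ft₁ : E d₁ → E d₂ → E dv → E p)
    (hft₁lip : ∀ (z2 : E d₂) (v : E dv), LocallyLipschitz (fun z1 => ft₁ z1 z2 v)) :
    ((∃ (σt : E d₂ × E dv → Matrix (Fin p) (Fin p) ℝ) (ρt : E p → ℝ),
        SkedasticFn2 σt (zstar, vstar) ∧ AdmissibleDensity ρt ∧
        ∀ᵐ q : E d₂ × E dv ∂((volume : Measure (E d₂)).prod μv),
          ∀ᵐ w : E p × E d₁,
            ρ (mulVecE (σ q)⁻¹ (f₀ w.1 - f₁ w.2 q.1 q.2))
                * |(σ q)⁻¹.det * (fderiv ℝ f₀ w.1).det|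
              = ρt (mulVecE (σt q)⁻¹ (ft₀ w.1 - ft₁ w.2 q.1 q.2))
                  * |(σt q)⁻¹.det * (fderiv ℝ ft₀ w.1).det|)
      ↔ ∃ Q : Matrix (Fin p) (Fin p) ℝ, Q * Qᵀ = 1 ∧
          ∀ᵐ q : E d₂ × E dv ∂((volume : Measure (E d₂)).prod μv),
            (∀ z : E p, ft₀ z = mulVecE Q (f₀ z)) ∧
            (∀ z1 : E d₁, ft₁ z1 q.1 q.2 = mulVecE Q (f₁ z1 q.1 q.2)) ∧
            (Q * (σ q * σ q) * Qᵀ).IsDiag)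
    ∧
    (∀ (σt : E d₂ × E dv → Matrix (Fin p) (Fin p) ℝ) (ρt : E p → ℝ)
        (Q : Matrix (Fin p) (Fin p) ℝ),
      SkedasticFn2 σt (zstar, vstar) → AdmissibleDensity ρt →
      (∀ᵐ q : E d₂ × E dv ∂((volume : Measure (E d₂)).prod μv),
        ∀ᵐ w : E p × E d₁,
          ρ (mulVecE (σ q)⁻¹ (f₀ w.1 - f₁ w.2 q.1 q.2))
              * |(σ q)⁻¹.det * (fderiv ℝ f₀ w.1).det|
            = ρt (mulVecE (σt q)⁻¹ (ft₀ w.1 - ft₁ w.2 q.1 q.2))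
                * |(σt q)⁻¹.det * (fderiv ℝ ft₀ w.1).det|) →
      Q * Qᵀ = 1 →
      (∀ᵐ q : E d₂ × E dv ∂((volume : Measure (E d₂)).prod μv),
        (∀ z : E p, ft₀ z = mulVecE Q (f₀ z)) ∧
        (∀ z1 : E d₁, ft₁ z1 q.1 q.2 = mulVecE Q (f₁ z1 q.1 q.2)) ∧
        (Q * (σ q * σ q) * Qᵀ).IsDiag) →
      ∀ᵐ q : E d₂ × E dv ∂((volume : Measure (E d₂)).prod μv),
        σt q * σt q = Q * (σ q * σ q) * Qᵀ) := by
  classical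
  have key : ∀ (σt : E d₂ × E dv → Matrix (Fin p) (Fin p) ℝ) (ρt : E p → ℝ),
      SkedasticFn2 σt (zstar, vstar) → AdmissibleDensity ρt →
      ∀ q : E d₂ × E dv, q.2 ∈ V →
        (∀ᵐ w : E p × E d₁,
          ρ (mulVecE (σ q)⁻¹ (f₀ w.1 - f₁ w.2 q.1 q.2))
              * |(σ q)⁻¹.det * (fderiv ℝ f₀ w.1).det|
            = ρt (mulVecE (σt q)⁻¹ (ft₀ w.1 - ft₁ w.2 q.1 q.2))
                * |(σt q)⁻¹.det * (fderiv ℝ ft₀ w.1).det|) →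
        ∃ G : Matrix (Fin p) (Fin p) ℝ, (∀ z, ft₀ z = mulVecE G (f₀ z)) ∧
          (∀ z1, ft₁ z1 q.1 q.2 = mulVecE G (f₁ z1 q.1 q.2)) ∧
          σt q * σt q = G * (σ q * σ q) * Gᵀ := by
    intro σt ρt hσt hρt q hq heq
    exact per_point hf₀lip hf₀bij hf₀0 hf₀inv hf₀det hft₀lip hft₀bij hft₀0 hft₀det
      (F1 := fun z1 => f₁ z1 q.1 q.2) (Ft1 := fun z1 => ft₁ z1 q.1 q.2)
      (hf₁lip q.1 q.2 hq) (hft₁lip q.1 q.2) (hf₁surj q.1 q.2 hq) (hf₁rank q.1 q.2 hq)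
      hρ hρmax hρt (hσ.1 q) (hσ.2.1 q) (hσt.1 q) (hσt.2.1 q) heq
  have huniq : ∀ G G' : Matrix (Fin p) (Fin p) ℝ, (∀ z, ft₀ z = mulVecE G (f₀ z)) →
      (∀ z, ft₀ z = mulVecE G' (f₀ z)) → G = G' := by
    intro G G' h h'
    refine mulVecE_ext fun x => ?_
    obtain ⟨z, rfl⟩ := hf₀bij.2 x
    rw [← h, ← h']
  have hprod := prod_facts V μv hμV zstar vstar hμvstar
  refine ⟨⟨?_, ?_⟩, ?_⟩
  · rintro ⟨σt, ρt, hσt, hρt, hae⟩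
    rcases hprod with h0 | ⟨hV, hU⟩
    · refine ⟨1, by simp, ?_⟩
      rw [h0]
      simp
    · have hgood : ∀ᵐ q : E d₂ × E dv ∂((volume : Measure (E d₂)).prod μv),
          ∃ G : Matrix (Fin p) (Fin p) ℝ, (∀ z, ft₀ z = mulVecE G (f₀ z)) ∧
          (∀ z1, ft₁ z1 q.1 q.2 = mulVecE G (f₁ z1 q.1 q.2)) ∧
          σt q * σt q = G * (σ q * σ q) * Gᵀ := by
        filter_upwards [hV, hae] with q h1 h2
        exact key σt ρt hσt hρt q h1 h2
      have hfreq : ∃ᶠ q in nhds (zstar, vstar),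
          ∃ G : Matrix (Fin p) (Fin p) ℝ, (∀ z, ft₀ z = mulVecE G (f₀ z)) ∧
          (∀ z1, ft₁ z1 q.1 q.2 = mulVecE G (f₁ z1 q.1 q.2)) ∧
          σt q * σt q = G * (σ q * σ q) * Gᵀ := by
        intro hcon
        exact hU _ hcon (ae_iff.mp hgood)
      obtain ⟨-, G, hG, -, -⟩ := hfreq.exists
      have hfreq2 : ∃ᶠ q in nhds (zstar, vstar), σt q * σt q - G * (σ q * σ q) * Gᵀ = 0 := by
        refine hfreq.mono ?_
        rintro q ⟨G', h1, -, h3⟩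
        rw [huniq G G' hG h1, h3, sub_self]
      have hcont : ContinuousAt (fun q => σt q * σt q - G * (σ q * σ q) * Gᵀ)
          (zstar, vstar) := by
        have hc1 := hσt.2.2.2
        have hc2 := hσ.2.2.2
        have hcc : Continuous (fun x : Matrix (Fin p) (Fin p) ℝ × Matrix (Fin p) (Fin p) ℝ =>
            x.1 * x.1 - G * (x.2 * x.2) * Gᵀ) := by fun_prop
        exact hcc.continuousAt.comp (f := fun q => (σt q, σ q)) (hc1.prodMk hc2)
      have hz : σt (zstar, vstar) * σt (zstar, vstar)
          - G * (σ (zstar, vstar) * σ (zstar, vstar)) * Gᵀ = 0 := by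
        by_contra hne
        exact hfreq2 (hcont.eventually_ne hne)
      rw [hσ.2.2.1, hσt.2.2.1, mul_one, mul_one] at hz
      refine ⟨G, (sub_eq_zero.mp hz).symm, ?_⟩
      filter_upwards [hgood] with q hq
      obtain ⟨G', h1, h2, h3⟩ := hq
      obtain rfl := huniq G G' hG h1
      refine ⟨hG, h2, ?_⟩
      rw [← h3, diag_eq (hσt.1 q), Matrix.diagonal_mul_diagonal]
      exact Matrix.isDiag_diagonal _
  · rintro ⟨Q, hQ, hae⟩
    refine ⟨fun q => rotSked Q (σ q), fun u => ρ (mulVecE Qᵀ u), rotSked_sked hσ hQ,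
      adm_rot hρ Q hQ, ?_⟩
    have a1 := (Measure.quasiMeasurePreserving_fst
        (μ := (volume : Measure (E p))) (ν := (volume : Measure (E d₁)))).ae hf₀det
    filter_upwards [hae] with q hq
    obtain ⟨h0, h1, hdd⟩ := hq
    filter_upwards [a1] with w hw
    rw [rot_fderiv (hσ.1 q) (hσ.2.1 q) hQ hdd h0 hw.1, h0, h1, ← mulVecE_sub, ← mulVecE_mul,
      ← mulVecE_mul, rotSked_conj (hσ.1 q) (hσ.2.1 q) hQ hdd]
  · intro σt ρt Q hσt hρt hae hQ hae2
    rcases hprod with h0 | ⟨hV, -⟩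
    · rw [h0]
      simp
    · filter_upwards [hV, hae, hae2] with q h1 h2 h3
      obtain ⟨G, hG, -, hs⟩ := key σt ρt hσt hρt q h1 h2
      rw [← huniq G Q hG h3.1, hs]
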